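/- arXiv:2603.25224 — 4 statements merged into one kernel-verified Lean document; each statement's English description precedes it below -/
import Mathlib

section
/- Under the continuity assumption, the optimal (ℓ,𝒵)-fair discretized predictor f*_{(ℓ,𝒵)-fair} is also a minimizer over f ∈ ℱ_K of the Lagrangian-penalized risk ℛ_{λ*}(f) := R(f) + Σ_{s∈𝒮} Σ_{m=1}^M λ*_{s,m}(ℙ_s(f(X,s) ≤ z_m) − ℓ_m), where λ* is the optimal dual parameter from the characterization theorem (a minimizer of the dual objective H). -/
/-!
By the bias-variance decomposition (`risk_eq`), the penalized risk of a grid-valued `g` is a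
constant minus `∑ₛ 𝔼ₛ[score(g(X,s), f*(X,s))]`, where the score of `y` at `w` is
`-πₛ (y - w)² - ⟨λₛ, a(y) - ℓ⟩` (`penalized_eq`). It is therefore minimized by any measurable
predictor `g*` that maximizes the score pointwise; one exists since the grid is finite
(`exists_measurable_argmax`).

The point is that `g*` is fair when `λ` minimizes the dual objective (`fair_of_dual_min`). Two grid
points have equal scores for at most one value `w`, and `f*(X,s)` has no atoms by the continuity
assumption (`no_atom`), so the pointwise maximizer is almost surely unique. Shifting one
coordinate of `λₛ` by `t` then almost surely leaves the maximizer unchanged for small `t`, and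
comparing the dual objective at `λ` and at its shifts, for `t ↓ 0` and `t ↑ 0`, yields
`ℙₛ(g*(X,s) ≤ zₘ) = ℓₘ`.

Hence the optimal fair predictor has risk at most that of `g*`. The penalties of both vanish, so it
minimizes the penalized risk as `g*` does.
-/

open MeasureTheory ProbabilityTheory Filter Function

noncomputable section

namespace FairReg

/-- The regular grid `𝒴_K = {y_k = -A + 2A(k-1)/(K-1)}` of `[-A, A]` with `K` points
(indexed here by `k ∈ {0, …, K-1}`). -/
def grid (A : ℝ) (K : ℕ) : Finset ℝ :=
  (Finset.range K).image (fun k : ℕ => -A + 2 * A * (k : ℝ) / ((K : ℝ) - 1))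

/-- Maximum of `g` over a finite set `t` of reals, `max_{y ∈ t} g y`
(realized as the supremum of the image). -/
def gmax (t : Finset ℝ) (g : ℝ → ℝ) : ℝ := sSup (g '' (t : Set ℝ))

/-- Projection (clamp) `Π_{[-A,A]}` onto the interval `[-A, A]`. -/
def clamp (A t : ℝ) : ℝ := max (-A) (min A t)

/-- The indicator vector `a(y) = (1{y ≤ z_1}, …, 1{y ≤ z_M})`. -/
def aInd {M : ℕ} (z : Fin M → ℝ) (y : ℝ) (m : Fin M) : ℝ := if y ≤ z m then 1 else 0

/-- Conditional probability `ℙ_s(E) = ℙ(E | S = s)`. -/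
def condProb {Ω 𝒮 : Type*} [MeasurableSpace Ω] (μ : Measure Ω) (S : Ω → 𝒮) (s : 𝒮)
    (E : Set Ω) : ℝ := (μ[|S ⁻¹' {s}] E).toReal

/-- The (population) squared risk `R(f) = 𝔼[(Y - f(X,S))²]`. -/
def risk {Ω 𝒮 : Type*} [MeasurableSpace Ω] {d : ℕ} (μ : Measure Ω)
    (X : Ω → Fin d → ℝ) (S : Ω → 𝒮) (Y : Ω → ℝ) (f : (Fin d → ℝ) → 𝒮 → ℝ) : ℝ :=
  ∫ ω, (Y ω - f (X ω) (S ω)) ^ 2 ∂μ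

end FairReg

/-! ### Finite maximization and the score -/

/-- A finite maximization problem depending measurably on a parameter has a measurable
selection of maximizers. -/
theorem exists_measurable_argmax (T : Finset ℝ) (hT : T.Nonempty) (F : ℝ → ℝ → ℝ)
    (hF : ∀ y, Measurable (F y)) :
    ∃ sel : ℝ → ℝ, Measurable sel ∧ (∀ w, sel w ∈ T) ∧ ∀ w, ∀ y ∈ T, F y w ≤ F (sel w) w := by
  suffices h : ∃ sel : ℝ → ℝ, Measurable sel ∧ Measurable (fun w => F (sel w) w) ∧
      (∀ w, sel w ∈ T) ∧ ∀ w, ∀ y ∈ T, F y w ≤ F (sel w) w by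
    obtain ⟨sel, h1, -, h3, h4⟩ := h
    exact ⟨sel, h1, h3, h4⟩
  induction hT using Finset.Nonempty.cons_induction with
  | singleton a =>
    exact ⟨fun _ => a, measurable_const, hF a, by simp, by simp⟩
  | cons a t ha ht ih =>
    obtain ⟨sel, h1, h2, h3, h4⟩ := ih
    have hset : MeasurableSet {w | F (sel w) w ≤ F a w} := measurableSet_le h2 (hF a)
    refine ⟨fun w => if F (sel w) w ≤ F a w then a else sel w,
      Measurable.ite hset measurable_const h1, ?_, ?_, ?_⟩
    · have : (fun w => F (if F (sel w) w ≤ F a w then a else sel w) w) =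
          fun w => if F (sel w) w ≤ F a w then F a w else F (sel w) w := by
        funext w; split_ifs <;> rfl
      rw [this]
      exact Measurable.ite hset (hF a) h2
    · intro w
      dsimp only
      split_ifs
      · simp
      · simp [h3 w]
    · intro w y hy
      dsimp only
      rcases Finset.mem_cons.1 hy with rfl | hy
      · split_ifs with h
        · exact le_rfl
        · exact (not_le.1 h).le
      · split_ifs with h
        · exact (h4 w y hy).trans h
        · exact h4 w y hy

theorem gmax_eq (T : Finset ℝ) (g : ℝ → ℝ) (y₀ : ℝ) (h0 : y₀ ∈ T) (h : ∀ y ∈ T, g y ≤ g y₀) :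
    FairReg.gmax T g = g y₀ :=
  IsGreatest.csSup_eq ⟨⟨y₀, h0, rfl⟩, by rintro _ ⟨y, hy, rfl⟩; exact h y hy⟩

theorem integrable_comp_finset {Ω : Type*} [MeasurableSpace Ω] (ν : Measure Ω) (T : Finset ℝ)
    (h : Ω → ℝ) (hm : Measurable h) (hT : ∀ ω, h ω ∈ T) (Φ : ℝ → Ω → ℝ)
    (hΦ : ∀ y ∈ T, Integrable (Φ y) ν) : Integrable (fun ω => Φ (h ω) ω) ν := by
  have : (fun ω => Φ (h ω) ω) = fun ω => ∑ y ∈ T, (h ⁻¹' {y}).indicator (Φ y) ω := by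
    funext ω
    rw [Finset.sum_eq_single (h ω)]
    · simp
    · intro b _ hb
      simp [Set.indicator, hb.symm]
    · intro hn; exact absurd (hT ω) hn
  rw [this]
  exact integrable_finsetSum _ fun y hy => (hΦ y hy).indicator (hm (measurableSet_singleton y))

/-- The integrand of the dual objective: minus the Lagrangian cost of predicting `y` where the
regression function equals `w`, in a group of weight `p`. -/
def score {M : ℕ} (p : ℝ) (z ℓ lam : Fin M → ℝ) (y w : ℝ) : ℝ :=
  -p * (y - w) ^ 2 - ∑ m, lam m * (FairReg.aInd z y m - ℓ m)

theorem measurable_score {M : ℕ} (p : ℝ) (z ℓ lam : Fin M → ℝ) (y : ℝ) :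
    Measurable (score p z ℓ lam y) := by
  unfold score; fun_prop

theorem measurable_aInd {M : ℕ} (z : Fin M → ℝ) (m : Fin M) :
    Measurable (fun y => FairReg.aInd z y m) :=
  Measurable.ite measurableSet_Iic measurable_const measurable_const

theorem abs_aInd_le {M : ℕ} (z : Fin M → ℝ) (m : Fin M) (y : ℝ) : |FairReg.aInd z y m| ≤ 1 := by
  unfold FairReg.aInd; split_ifs <;> simp

theorem integrable_aInd {Ω : Type*} [MeasurableSpace Ω] (ν : Measure Ω) [IsFiniteMeasure ν]
    {M : ℕ} (z : Fin M → ℝ) (m : Fin M) (h : Ω → ℝ) (hm : Measurable h) :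
    Integrable (fun ω => FairReg.aInd z (h ω) m) ν :=
  Integrable.of_bound ((measurable_aInd z m).comp hm).aestronglyMeasurable 1
    (ae_of_all _ fun ω => abs_aInd_le z m _)

theorem integral_aInd {Ω : Type*} [MeasurableSpace Ω] (ν : Measure Ω)
    {M : ℕ} (z : Fin M → ℝ) (m : Fin M) (h : Ω → ℝ) (hm : Measurable h) :
    ∫ ω, FairReg.aInd z (h ω) m ∂ν = (ν {ω | h ω ≤ z m}).toReal := by
  have hs : MeasurableSet {ω | h ω ≤ z m} := measurableSet_le hm measurable_const
  have h1 : (fun ω => FairReg.aInd z (h ω) m) = {ω | h ω ≤ z m}.indicator 1 := by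
    funext ω; simp [FairReg.aInd, Set.indicator]
  rw [h1, integral_indicator_one hs]; rfl

theorem score_update {M : ℕ} (p : ℝ) (z ℓ lam : Fin M → ℝ) (m : Fin M) (t y w : ℝ) :
    score p z ℓ (update lam m (lam m + t)) y w
      = score p z ℓ lam y w - t * (FairReg.aInd z y m - ℓ m) := by
  unfold score
  rw [← Finset.add_sum_erase _ _ (Finset.mem_univ m),
    ← Finset.add_sum_erase (a := m) Finset.univ (fun m => lam m * (FairReg.aInd z y m - ℓ m))
      (Finset.mem_univ m)]
  rw [Finset.sum_congr rfl (g := fun m => lam m * (FairReg.aInd z y m - ℓ m))]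
  · simp; ring
  · intro i hi
    rw [update_of_ne (Finset.ne_of_mem_erase hi)]

theorem integrable_score {Ω : Type*} [MeasurableSpace Ω] (ν : Measure Ω) [IsFiniteMeasure ν]
    {M : ℕ} (p : ℝ) (z ℓ lam : Fin M → ℝ) (A : ℝ) (W : Ω → ℝ) (hW : Measurable W)
    (hWA : ∀ᵐ ω ∂ν, |W ω| ≤ A) (T : Finset ℝ) (h : Ω → ℝ) (hm : Measurable h)
    (hT : ∀ ω, h ω ∈ T) : Integrable (fun ω => score p z ℓ lam (h ω) (W ω)) ν := by
  refine integrable_comp_finset ν T h hm hT (fun y ω => score p z ℓ lam y (W ω)) fun y _ => ?_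
  unfold score
  refine Integrable.sub (Integrable.const_mul ?_ _) (integrable_const _)
  refine Integrable.of_bound (by fun_prop) ((|y| + A) ^ 2) ?_
  filter_upwards [hWA] with ω hω
  rw [Real.norm_eq_abs, abs_pow]
  have := abs_sub y (W ω)
  gcongr
  linarith

/-- The scores of two distinct grid points differ by a nonconstant affine function of `w`, so they
agree for at most one `w`. -/
theorem score_ties {M : ℕ} (p : ℝ) (hp : 0 < p) (z ℓ lam : Fin M → ℝ) {y y' : ℝ} (hy : y ≠ y')
    {w w' : ℝ} (h : score p z ℓ lam y w = score p z ℓ lam y' w)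
    (h' : score p z ℓ lam y w' = score p z ℓ lam y' w') : w = w' := by
  unfold score at h h'
  have h1 : (p * (y - y')) * (w - w') = 0 := by linarith
  rcases mul_eq_zero.1 h1 with h2 | h2
  · exact absurd h2 (mul_ne_zero hp.ne' (sub_ne_zero.2 hy))
  · linarith

/-! ### Fairness from dual optimality -/

/-- First-order condition for the dual problem of one group: if `W` has no atoms and `lam`
minimizes the dual objective, then any measurable selection of score maximizers meets all the
constraints `P(sel (W) ≤ zₘ) = ℓₘ`. -/
theorem fair_of_dual_min {Ω : Type*} [MeasurableSpace Ω] (ν : Measure Ω) [IsProbabilityMeasure ν]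
    {M : ℕ} (p : ℝ) (hp : 0 < p) (z ℓ lam : Fin M → ℝ) (A : ℝ) (W : Ω → ℝ) (hW : Measurable W)
    (hWA : ∀ᵐ ω ∂ν, |W ω| ≤ A) (hatom : ∀ c, ν {ω | W ω = c} = 0)
    (T : Finset ℝ) (hT : T.Nonempty)
    (hmin : ∀ lam' : Fin M → ℝ, ∫ ω, FairReg.gmax T (fun y => score p z ℓ lam y (W ω)) ∂ν
      ≤ ∫ ω, FairReg.gmax T (fun y => score p z ℓ lam' y (W ω)) ∂ν)
    (sel : ℝ → ℝ) (hsel : Measurable sel) (hselT : ∀ w, sel w ∈ T)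
    (hmax : ∀ w, ∀ y ∈ T, score p z ℓ lam y w ≤ score p z ℓ lam (sel w) w) (m : Fin M) :
    (ν {ω | sel (W ω) ≤ z m}).toReal = ℓ m := by
  have hex : ∀ t : ℝ, ∃ sel' : ℝ → ℝ, Measurable sel' ∧ (∀ w, sel' w ∈ T) ∧ ∀ w, ∀ y ∈ T,
      score p z ℓ (update lam m (lam m + t)) y w ≤
      score p z ℓ (update lam m (lam m + t)) (sel' w) w := fun t =>
    exists_measurable_argmax T hT _ (measurable_score p z ℓ _)
  choose σ hσm hσT hσmax using hex
  have hint : ∀ r : ℝ → ℝ, Measurable r →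
      Integrable (fun ω => FairReg.aInd z (r (W ω)) m) ν := fun r hr =>
    integrable_aInd ν z m _ (hr.comp hW)
  -- With `H` the dual objective of this group and `σ t` a maximizer selection for the multiplier
  -- shifted by `t`, `0 ≤ H(lam + t eₘ) - H(lam) ≤ -t (P(σ t (W) ≤ zₘ) - ℓₘ)`.
  have key : ∀ t : ℝ, t * (∫ ω, FairReg.aInd z (σ t (W ω)) m ∂ν - ℓ m) ≤ 0 := by
    intro t
    have h1 := hmin (update lam m (lam m + t))
    have e1 : ∀ ω, FairReg.gmax T (fun y => score p z ℓ lam y (W ω))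
        = score p z ℓ lam (sel (W ω)) (W ω) := fun ω =>
      gmax_eq T _ _ (hselT _) (hmax _)
    have e2 : ∀ ω, FairReg.gmax T (fun y => score p z ℓ (update lam m (lam m + t)) y (W ω))
        = score p z ℓ lam (σ t (W ω)) (W ω) - t * (FairReg.aInd z (σ t (W ω)) m - ℓ m) :=
      fun ω => by
      rw [gmax_eq T _ _ (hσT t _) (hσmax t _), score_update]
    simp_rw [e1, e2] at h1
    have i1 := integrable_score ν p z ℓ lam A W hW hWA T (fun ω => sel (W ω)) (hsel.comp hW)
      (fun ω => hselT _)
    have i2 := integrable_score ν p z ℓ lam A W hW hWA T (fun ω => σ t (W ω)) ((hσm t).comp hW)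
      (fun ω => hσT t _)
    have i3 : Integrable (fun ω => FairReg.aInd z (σ t (W ω)) m - ℓ m) ν :=
      (hint (σ t) (hσm t)).sub (integrable_const (ℓ m))
    rw [integral_sub i2 (i3.const_mul t)] at h1
    have h2 := integral_mono i2 i1 (fun ω => hmax _ _ (hσT t _))
    have h3 : ∫ ω, t * (FairReg.aInd z (σ t (W ω)) m - ℓ m) ∂ν
        = t * (∫ ω, FairReg.aInd z (σ t (W ω)) m ∂ν - ℓ m) := by
      rw [integral_const_mul, integral_sub (hint _ (hσm t)) (integrable_const _)]
      simp
    linarith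
  -- ties between two grid points confine `W` to a single value, hence are negligible
  have huniq : ∀ᵐ ω ∂ν, ∀ y ∈ T, y ≠ sel (W ω) →
      score p z ℓ lam y (W ω) < score p z ℓ lam (sel (W ω)) (W ω) := by
    have hne : ∀ᵐ ω ∂ν, ∀ y ∈ T, ∀ y' ∈ T, y ≠ y' →
        score p z ℓ lam y (W ω) ≠ score p z ℓ lam y' (W ω) := by
      refine (ae_ball_iff T.countable_toSet).2 fun y _ =>
        (ae_ball_iff T.countable_toSet).2 fun y' _ => ?_
      by_cases hyy : y = y'
      · exact ae_of_all _ fun ω h => absurd hyy h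
      by_cases hw : ∃ w, score p z ℓ lam y w = score p z ℓ lam y' w
      · obtain ⟨w, hw⟩ := hw
        have : ∀ᵐ ω ∂ν, W ω ≠ w := by
          rw [ae_iff]; simpa using hatom w
        filter_upwards [this] with ω hω _ heq
        exact hω (score_ties p hp z ℓ lam hyy heq hw)
      · exact ae_of_all _ fun ω _ h => hw ⟨_, h⟩
    filter_upwards [hne] with ω hω y hy hys
    exact lt_of_le_of_ne (hmax _ y hy) (hω y hy _ (hselT _) hys)
  -- where the maximizer is unique, `σ t (W) = sel (W)` for all small `t`
  have hlim : Tendsto (fun t => ∫ ω, FairReg.aInd z (σ t (W ω)) m ∂ν) (nhds 0)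
      (nhds (∫ ω, FairReg.aInd z (sel (W ω)) m ∂ν)) := by
    refine tendsto_integral_filter_of_dominated_convergence (fun _ => 1)
      (Eventually.of_forall fun t => (hint _ (hσm t)).aestronglyMeasurable)
      (Eventually.of_forall fun t => ae_of_all _ fun ω => abs_aInd_le z m _) (integrable_const _) ?_
    filter_upwards [huniq] with ω hω
    have hev : ∀ᶠ t : ℝ in nhds 0, ∀ y ∈ T, y ≠ sel (W ω) →
        score p z ℓ lam y (W ω) - t * (FairReg.aInd z y m - ℓ m) <
        score p z ℓ lam (sel (W ω)) (W ω) - t * (FairReg.aInd z (sel (W ω)) m - ℓ m) := by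
      rw [Filter.eventually_all_finset]
      intro y hy
      by_cases hys : y = sel (W ω)
      · exact Eventually.of_forall fun t h => absurd hys h
      have c1 : ContinuousAt (fun t : ℝ =>
          score p z ℓ lam y (W ω) - t * (FairReg.aInd z y m - ℓ m)) 0 := by
        fun_prop
      have c2 : ContinuousAt (fun t : ℝ =>
          score p z ℓ lam (sel (W ω)) (W ω)
            - t * (FairReg.aInd z (sel (W ω)) m - ℓ m)) 0 := by
        fun_prop
      filter_upwards [c1.eventually_lt c2 (by simpa using hω y hy hys)] with t ht _ using ht
    refine tendsto_const_nhds.congr' ?_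
    filter_upwards [hev] with t ht
    have : σ t (W ω) = sel (W ω) := by
      by_contra hcon
      have h1 := ht _ (hσT t _) hcon
      have h2 := hσmax t (W ω) _ (hselT (W ω))
      rw [score_update, score_update] at h2
      linarith
    rw [this]
  have hfin : ∫ ω, FairReg.aInd z (sel (W ω)) m ∂ν = ℓ m := by
    apply le_antisymm
    · refine le_of_tendsto (hlim.mono_left (nhdsWithin_le_nhds (s := Set.Ioi 0))) ?_
      filter_upwards [self_mem_nhdsWithin] with t ht
      have := key t
      have ht : 0 < t := ht
      nlinarith [nonpos_of_mul_nonpos_right this ht]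
    · refine ge_of_tendsto (hlim.mono_left (nhdsWithin_le_nhds (s := Set.Iio 0))) ?_
      filter_upwards [self_mem_nhdsWithin] with t ht
      have := key t
      have ht : t < 0 := ht
      by_contra! hc
      nlinarith [mul_pos_of_neg_of_neg ht (sub_neg.2 hc)]
  rw [← hfin]
  exact (integral_aInd ν z m _ (hsel.comp hW)).symm

theorem no_atom {Ω : Type*} [MeasurableSpace Ω] (ν : Measure Ω) [IsProbabilityMeasure ν]
    (W : Ω → ℝ) (hW : Measurable W)
    (hc : Continuous fun t : ℝ => (ν {ω | W ω ≤ t}).toReal) (c : ℝ) : ν {ω | W ω = c} = 0 := by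
  have h1 : ∀ t < c, (ν {ω | W ω = c}).toReal ≤
      (ν {ω | W ω ≤ c}).toReal - (ν {ω | W ω ≤ t}).toReal := by
    intro t ht
    have hd : Disjoint {ω | W ω = c} {ω | W ω ≤ t} := by
      rw [Set.disjoint_left]
      intro ω (h : W ω = c) (h' : W ω ≤ t)
      linarith
    have h2 := measureReal_union (μ := ν) hd (measurableSet_le hW measurable_const)
    have h3 : ν.real ({ω | W ω = c} ∪ {ω | W ω ≤ t}) ≤ ν.real {ω | W ω ≤ c} :=
      measureReal_mono (by
        rintro ω (h | h)
        · exact le_of_eq h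
        · exact le_trans h ht.le)
    simp only [measureReal_def] at h2 h3
    linarith
  have h4 : (ν {ω | W ω = c}).toReal ≤ 0 := by
    have : Tendsto (fun t => (ν {ω | W ω ≤ c}).toReal - (ν {ω | W ω ≤ t}).toReal)
        (nhdsWithin c (Set.Iio c)) (nhds 0) := by
      have := (tendsto_const_nhds (x := (ν {ω | W ω ≤ c}).toReal)).sub (hc.tendsto c)
      rw [sub_self] at this
      exact this.mono_left nhdsWithin_le_nhds
    refine ge_of_tendsto this ?_
    filter_upwards [self_mem_nhdsWithin] with t ht using h1 t ht
  have h5 : (ν {ω | W ω = c}).toReal = 0 := le_antisymm h4 ENNReal.toReal_nonneg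
  simpa [ENNReal.toReal_eq_zero_iff] using h5

theorem grid_bound (A : ℝ) (hA : 0 < A) (K : ℕ) (hK : 2 ≤ K) {y : ℝ} (hy : y ∈ FairReg.grid A K) :
    |y| ≤ A := by
  unfold FairReg.grid at hy
  obtain ⟨k, hk, rfl⟩ := Finset.mem_image.1 hy
  have hk1 : (k : ℝ) + 1 ≤ K := by exact_mod_cast Finset.mem_range.1 hk
  have hK1 : (2 : ℝ) ≤ K := by exact_mod_cast hK
  have hpos : (0 : ℝ) < (K : ℝ) - 1 := by linarith
  have h1 : 2 * A * (k : ℝ) / ((K : ℝ) - 1) ≤ 2 * A := by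
    rw [div_le_iff₀ hpos]
    exact mul_le_mul_of_nonneg_left (by linarith) (by linarith)
  have h0 : 0 ≤ 2 * A * (k : ℝ) / ((K : ℝ) - 1) := by positivity
  rw [abs_le]
  constructor <;> linarith

theorem grid_nonempty (A : ℝ) (K : ℕ) (hK : 2 ≤ K) : (FairReg.grid A K).Nonempty := by
  unfold FairReg.grid
  exact (Finset.nonempty_range_iff.2 (by omega)).image _

/-! ### The penalized risk in terms of the score -/

/-- Bias-variance decomposition: `Y - f*(X,S)` is orthogonal to the bounded functions
of `(X,S)`. -/
theorem risk_eq {Ω 𝒮 : Type} [MeasurableSpace Ω] [MeasurableSpace 𝒮]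
    (μ : Measure Ω) [IsProbabilityMeasure μ]
    {d : ℕ} (X : Ω → Fin d → ℝ) (S : Ω → 𝒮) (Y : Ω → ℝ)
    (hX : Measurable X) (hS : Measurable S) (hY : Measurable Y)
    (A : ℝ) (hYbd : ∀ᵐ ω ∂μ, |Y ω| ≤ A)
    (fstar : (Fin d → ℝ) → 𝒮 → ℝ)
    (hfstarMeas : Measurable (Function.uncurry fstar))
    (hfstarBd : ∀ᵐ ω ∂μ, |fstar (X ω) (S ω)| ≤ A)
    (hreg : (fun ω => fstar (X ω) (S ω))
      =ᵐ[μ] μ[Y | MeasurableSpace.comap (fun ω => (X ω, S ω)) inferInstance])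
    (g : (Fin d → ℝ) → 𝒮 → ℝ) (hg : Measurable (Function.uncurry g))
    (hgA : ∀ x s, |g x s| ≤ A) :
    FairReg.risk μ X S Y g = ∫ ω, (Y ω - fstar (X ω) (S ω)) ^ 2 ∂μ
      + ∫ ω, (g (X ω) (S ω) - fstar (X ω) (S ω)) ^ 2 ∂μ := by
  have hXS : Measurable fun ω => (X ω, S ω) := hX.prodMk hS
  have hle : MeasurableSpace.comap (fun ω => (X ω, S ω)) inferInstance ≤ ‹MeasurableSpace Ω› :=
    hXS.comap_le
  set F : Ω → ℝ := fun ω => fstar (X ω) (S ω) with hF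
  set G : Ω → ℝ := fun ω => g (X ω) (S ω) with hG
  have hFm : Measurable F := hfstarMeas.comp hXS
  have hGm : Measurable G := hg.comp hXS
  set h : Ω → ℝ := fun ω => F ω - G ω with hh
  have hsm : StronglyMeasurable[MeasurableSpace.comap (fun ω => (X ω, S ω)) inferInstance] h := by
    have : Measurable[MeasurableSpace.comap (fun ω => (X ω, S ω)) inferInstance] h :=
      (hfstarMeas.sub hg).comp (comap_measurable _)
    exact this.stronglyMeasurable
  have hhm : Measurable h := hFm.sub hGm
  have bd : ∀ᵐ ω ∂μ, |Y ω| ≤ A ∧ |F ω| ≤ A ∧ |G ω| ≤ A := by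
    filter_upwards [hYbd, hfstarBd] with ω h1 h2 using ⟨h1, h2, hgA _ _⟩
  have iY : Integrable Y μ := Integrable.of_bound hY.aestronglyMeasurable A hYbd
  have hhbd : ∀ᵐ ω ∂μ, ‖h ω‖ ≤ 2 * A := by
    filter_upwards [bd] with ω ⟨_, h1, h2⟩
    have := abs_sub (F ω) (G ω)
    rw [Real.norm_eq_abs]
    change |F ω - G ω| ≤ _
    linarith
  have ih : Integrable h μ := Integrable.of_bound hhm.aestronglyMeasurable _ hhbd
  have iF : Integrable F μ := Integrable.of_bound hFm.aestronglyMeasurable A hfstarBd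
  have iYh : Integrable (Y * h) μ := iY.mul_bdd (c := 2 * A) hhm.aestronglyMeasurable hhbd
  have iFh : Integrable (F * h) μ := iF.mul_bdd (c := 2 * A) hhm.aestronglyMeasurable hhbd
  have ihh : Integrable (h * h) μ := ih.mul_bdd (c := 2 * A) hhm.aestronglyMeasurable hhbd
  have iD : Integrable (fun ω => (Y ω - F ω) ^ 2) μ := by
    refine Integrable.of_bound (by fun_prop) ((2 * A) ^ 2) ?_
    filter_upwards [bd] with ω ⟨h1, h2, _⟩
    rw [Real.norm_eq_abs, abs_pow]
    have := abs_sub (Y ω) (F ω)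
    gcongr
    linarith
  have horth : ∫ ω, (Y * h) ω ∂μ = ∫ ω, (F * h) ω ∂μ := by
    rw [← integral_condExp hle]
    apply integral_congr_ae
    filter_upwards [condExp_mul_of_stronglyMeasurable_right hsm iYh iY, hreg] with ω h1 h2
    rw [h1, Pi.mul_apply, ← h2]; rfl
  have e1 : FairReg.risk μ X S Y g =
      ∫ ω, ((Y ω - F ω) ^ 2 + ((h * h) ω + 2 * ((Y * h) ω - (F * h) ω))) ∂μ := by
    unfold FairReg.risk
    refine integral_congr_ae (ae_of_all _ fun ω => ?_)
    simp only [hh, Pi.mul_apply, hG]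
    ring
  have e2 : ∫ ω, (G ω - F ω) ^ 2 ∂μ = ∫ ω, (h * h) ω ∂μ := by
    refine integral_congr_ae (ae_of_all _ fun ω => ?_)
    simp only [hh, Pi.mul_apply]
    ring
  have i4 : Integrable (fun ω => 2 * ((Y * h) ω - (F * h) ω)) μ := (iYh.sub iFh).const_mul 2
  have i5 : Integrable (fun ω => (h * h) ω + 2 * ((Y * h) ω - (F * h) ω)) μ := ihh.add i4
  rw [e1, e2, integral_add iD i5, integral_add ihh i4, integral_const_mul,
    integral_sub iYh iFh, horth]
  ring

/-- Up to a constant that does not depend on `g`, the penalized risk of `g` is minus the sum over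
the groups of its expected scores. -/
theorem penalized_eq {Ω 𝒮 : Type} [MeasurableSpace Ω] [Fintype 𝒮]
    [MeasurableSpace 𝒮] [MeasurableSingletonClass 𝒮]
    (μ : Measure Ω) [IsProbabilityMeasure μ]
    {d : ℕ} (X : Ω → Fin d → ℝ) (S : Ω → 𝒮) (Y : Ω → ℝ)
    (hX : Measurable X) (hS : Measurable S) (hY : Measurable Y)
    (A : ℝ) (hYbd : ∀ᵐ ω ∂μ, |Y ω| ≤ A)
    (hπ : ∀ s : 𝒮, 0 < (μ (S ⁻¹' {s})).toReal)
    {M : ℕ} (ℓ : Fin M → ℝ) (z : Fin M → ℝ)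
    (fstar : (Fin d → ℝ) → 𝒮 → ℝ)
    (hfstarMeas : Measurable (Function.uncurry fstar))
    (hfstarBd : ∀ᵐ ω ∂μ, |fstar (X ω) (S ω)| ≤ A)
    (hreg : (fun ω => fstar (X ω) (S ω))
      =ᵐ[μ] μ[Y | MeasurableSpace.comap (fun ω => (X ω, S ω)) inferInstance])
    (lam : 𝒮 → Fin M → ℝ)
    (g : (Fin d → ℝ) → 𝒮 → ℝ) (hg : Measurable (Function.uncurry g))
    (hgA : ∀ x s, |g x s| ≤ A) :
    FairReg.risk μ X S Y g + ∑ s, ∑ m, lam s m *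
        (FairReg.condProb μ S s {ω | g (X ω) s ≤ z m} - ℓ m)
      = ∫ ω, (Y ω - fstar (X ω) (S ω)) ^ 2 ∂μ
        - ∑ s, ∫ ω, score (μ (S ⁻¹' {s})).toReal z ℓ (lam s) (g (X ω) s) (fstar (X ω) s)
          ∂(μ[|S ⁻¹' {s}]) := by
  have hXS : Measurable fun ω => (X ω, S ω) := hX.prodMk hS
  rw [risk_eq μ X S Y hX hS hY A hYbd fstar hfstarMeas hfstarBd hreg g hg hgA]
  have hFm : Measurable fun ω => fstar (X ω) (S ω) := hfstarMeas.comp hXS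
  have hGm : Measurable fun ω => g (X ω) (S ω) := hg.comp hXS
  set D : Ω → ℝ := fun ω => (g (X ω) (S ω) - fstar (X ω) (S ω)) ^ 2 with hD
  have hDm : Measurable D := by fun_prop
  have hDbd : ∀ᵐ ω ∂μ, ‖D ω‖ ≤ (2 * A) ^ 2 := by
    filter_upwards [hfstarBd] with ω h1
    rw [Real.norm_eq_abs, abs_pow]
    have := abs_sub (g (X ω) (S ω)) (fstar (X ω) (S ω))
    have := hgA (X ω) (S ω)
    gcongr
    linarith
  have hν : ∀ s, IsProbabilityMeasure (μ[|S ⁻¹' {s}]) := fun s =>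
    cond_isProbabilityMeasure fun h0 => by simpa [h0] using hπ s
  have hDs : ∀ s, Integrable D (μ[|S ⁻¹' {s}]) := fun s =>
    Integrable.of_bound hDm.aestronglyMeasurable _ (cond_absolutelyContinuous.ae_le hDbd)
  have htot : ∫ ω, D ω ∂μ = ∑ s, (μ (S ⁻¹' {s})).toReal * ∫ ω, D ω ∂(μ[|S ⁻¹' {s}]) := by
    conv_lhs => rw [← sum_meas_smul_cond_fiber hS μ]
    rw [integral_finsetSum_measure fun s _ => (hDs s).smul_measure (measure_ne_top _ _)]
    simp [integral_smul_measure]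
  rw [htot, add_assoc, ← Finset.sum_add_distrib, sub_eq_add_neg, ← Finset.sum_neg_distrib]
  congr 1
  refine Finset.sum_congr rfl fun s _ => ?_
  have hgs : Measurable fun ω => g (X ω) s := hg.comp (hX.prodMk measurable_const)
  have ia : ∀ m, Integrable (fun ω => lam s m * (FairReg.aInd z (g (X ω) s) m - ℓ m))
      (μ[|S ⁻¹' {s}]) := fun m =>
    ((integrable_aInd _ z m _ hgs).sub (integrable_const _)).const_mul _
  have e1 : ∫ ω, score (μ (S ⁻¹' {s})).toReal z ℓ (lam s) (g (X ω) s) (fstar (X ω) s)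
        ∂(μ[|S ⁻¹' {s}]) = ∫ ω, (-(μ (S ⁻¹' {s})).toReal * D ω
          - ∑ m, lam s m * (FairReg.aInd z (g (X ω) s) m - ℓ m)) ∂(μ[|S ⁻¹' {s}]) := by
    refine integral_congr_ae ?_
    filter_upwards [ae_cond_mem (μ := μ) (hS (measurableSet_singleton s))] with ω hω
    have hω : S ω = s := hω
    simp only [score, hD, hω]
  rw [e1, integral_sub ((hDs s).const_mul _) (integrable_finsetSum _ fun m _ => ia m),
    integral_const_mul, integral_finsetSum _ fun m _ => ia m]
  have e2 : ∀ m, ∫ ω, lam s m * (FairReg.aInd z (g (X ω) s) m - ℓ m) ∂(μ[|S ⁻¹' {s}])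
      = lam s m * (FairReg.condProb μ S s {ω | g (X ω) s ≤ z m} - ℓ m) := by
    intro m
    rw [integral_const_mul, integral_sub (integrable_aInd _ z m _ hgs) (integrable_const _),
      integral_aInd _ z m _ hgs]
    simp [FairReg.condProb]
  simp_rw [e2]
  ring

/-- Under the continuity assumption, the optimal `(ℓ,𝒵)`-fair discretized
predictor is also a minimizer over `ℱ_K` of the Lagrangian-penalized risk `ℛ_{λ*}`, where
`λ*` is a minimizer of the dual objective `H`. -/
theorem optimal_lZ_fair_minimizes_penalized_risk
    {Ω 𝒮 : Type} [MeasurableSpace Ω] [Fintype 𝒮] [Nonempty 𝒮]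
    [MeasurableSpace 𝒮] [MeasurableSingletonClass 𝒮]
    (μ : Measure Ω) [IsProbabilityMeasure μ]
    {d : ℕ} (X : Ω → Fin d → ℝ) (S : Ω → 𝒮) (Y : Ω → ℝ)
    (hX : Measurable X) (hS : Measurable S) (hY : Measurable Y)
    (A : ℝ) (hA : 0 < A) (hYbd : ∀ᵐ ω ∂μ, |Y ω| ≤ A)
    (hπ : ∀ s : 𝒮, 0 < (μ (S ⁻¹' {s})).toReal)
    (K : ℕ) (hK : 2 ≤ K)
    (M : ℕ) (hM : 1 ≤ M) (ℓ : Fin M → ℝ) (z : Fin M → ℝ)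
    (hℓ : ∀ m, ℓ m ∈ Set.Ioo (0 : ℝ) 1) (hℓmono : StrictMono ℓ)
    (hz : ∀ m, z m ∈ Set.Ioo (-A) A) (hzmono : StrictMono z)
    -- `f*` is the regression function `f*(x,s) = 𝔼[Y | X = x, S = s]`
    (fstar : (Fin d → ℝ) → 𝒮 → ℝ)
    (hfstarMeas : Measurable (Function.uncurry fstar))
    (hfstarBd : ∀ᵐ ω ∂μ, |fstar (X ω) (S ω)| ≤ A)
    (hreg : (fun ω => fstar (X ω) (S ω))
      =ᵐ[μ] μ[Y | MeasurableSpace.comap (fun ω => (X ω, S ω)) inferInstance])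
    -- continuity assumption
    (hcont : ∀ s : 𝒮, Continuous fun t : ℝ =>
      FairReg.condProb μ S s {ω | fstar (X ω) s ≤ t})
    -- `ffair = f*_{(ℓ,𝒵)-fair}` is a risk-minimizer of `R` over `(ℓ,𝒵)`-fair
    -- predictors in `ℱ_K`
    (ffair : (Fin d → ℝ) → 𝒮 → ℝ)
    (hffairMeas : Measurable (Function.uncurry ffair))
    (hffairGrid : ∀ x s, ffair x s ∈ FairReg.grid A K)
    (hffairFair : ∀ s m, FairReg.condProb μ S s {ω | ffair (X ω) s ≤ z m} = ℓ m)
    (hffairOpt : ∀ g : (Fin d → ℝ) → 𝒮 → ℝ, Measurable (Function.uncurry g) →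
      (∀ x s, g x s ∈ FairReg.grid A K) →
      (∀ s m, FairReg.condProb μ S s {ω | g (X ω) s ≤ z m} = ℓ m) →
      FairReg.risk μ X S Y ffair ≤ FairReg.risk μ X S Y g)
    -- `lam = λ*` is a minimizer of the dual objective `H`
    (lam : 𝒮 → Fin M → ℝ)
    (hlamOpt : ∀ lam' : 𝒮 → Fin M → ℝ,
      (∑ s, ∫ ω, FairReg.gmax (FairReg.grid A K)
          (fun y => -(μ (S ⁻¹' {s})).toReal * (y - fstar (X ω) s) ^ 2
            - ∑ m, lam s m * (FairReg.aInd z y m - ℓ m)) ∂(μ[|S ⁻¹' {s}]))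
      ≤ ∑ s, ∫ ω, FairReg.gmax (FairReg.grid A K)
          (fun y => -(μ (S ⁻¹' {s})).toReal * (y - fstar (X ω) s) ^ 2
            - ∑ m, lam' s m * (FairReg.aInd z y m - ℓ m)) ∂(μ[|S ⁻¹' {s}])) :
    -- conclusion: `ffair` minimizes the Lagrangian-penalized risk `ℛ_{λ*}` over `ℱ_K`
    ∀ g : (Fin d → ℝ) → 𝒮 → ℝ, Measurable (Function.uncurry g) →
      (∀ x s, g x s ∈ FairReg.grid A K) →
      FairReg.risk μ X S Y ffair
          + ∑ s, ∑ m, lam s m *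
              (FairReg.condProb μ S s {ω | ffair (X ω) s ≤ z m} - ℓ m)
        ≤ FairReg.risk μ X S Y g
          + ∑ s, ∑ m, lam s m *
              (FairReg.condProb μ S s {ω | g (X ω) s ≤ z m} - ℓ m) := by
  intro g hg hgT
  have hgA := fun (f : (Fin d → ℝ) → 𝒮 → ℝ) (hf : ∀ x s, f x s ∈ FairReg.grid A K) x s =>
    grid_bound A hA K hK (hf x s)
  have hT := grid_nonempty A K hK
  have hν : ∀ s, IsProbabilityMeasure (μ[|S ⁻¹' {s}]) := fun s =>
    cond_isProbabilityMeasure fun h0 => by simpa [h0] using hπ s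
  have hW : ∀ s, Measurable fun ω => fstar (X ω) s := fun s =>
    hfstarMeas.comp (hX.prodMk measurable_const)
  have hWA : ∀ s, ∀ᵐ ω ∂(μ[|S ⁻¹' {s}]), |fstar (X ω) s| ≤ A := by
    intro s
    filter_upwards [ae_cond_mem (μ := μ) (hS (measurableSet_singleton s)),
      cond_absolutelyContinuous.ae_le hfstarBd] with ω h1 h2
    have h1 : S ω = s := h1
    rwa [h1] at h2
  -- the pointwise maximizer of the score, in each group
  have hex := fun s => exists_measurable_argmax (FairReg.grid A K) hT
    (score (μ (S ⁻¹' {s})).toReal z ℓ (lam s)) (measurable_score _ z ℓ (lam s))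
  choose sel hselm hselT hselmax using hex
  -- the dual objective separates over the groups
  have hmin : ∀ s, ∀ l' : Fin M → ℝ,
      ∫ ω, FairReg.gmax (FairReg.grid A K)
          (fun y => score (μ (S ⁻¹' {s})).toReal z ℓ (lam s) y (fstar (X ω) s)) ∂(μ[|S ⁻¹' {s}])
      ≤ ∫ ω, FairReg.gmax (FairReg.grid A K)
          (fun y => score (μ (S ⁻¹' {s})).toReal z ℓ l' y (fstar (X ω) s)) ∂(μ[|S ⁻¹' {s}]) := by
    classical
    intro s l'
    have h := hlamOpt (update lam s l')
    rw [← Finset.add_sum_erase _ _ (Finset.mem_univ s),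
      ← Finset.add_sum_erase _ _ (Finset.mem_univ s), update_self] at h
    refine le_of_add_le_add_right (h.trans_eq ?_)
    congr 1
    refine Finset.sum_congr rfl fun i hi => ?_
    rw [update_of_ne (Finset.ne_of_mem_erase hi)]
  have hfair : ∀ s m, FairReg.condProb μ S s {ω | sel s (fstar (X ω) s) ≤ z m} = ℓ m :=
    fun s m => fair_of_dual_min (μ[|S ⁻¹' {s}]) _ (hπ s) z ℓ (lam s) A
      (fun ω => fstar (X ω) s) (hW s) (hWA s) (no_atom _ _ (hW s) (hcont s))
      (FairReg.grid A K) hT (hmin s) (sel s) (hselm s) (hselT s) (hselmax s) m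
  have hoptm : Measurable (Function.uncurry fun x s => sel s (fstar x s)) :=
    measurable_from_prod_countable_left fun s =>
      (hselm s).comp (hfstarMeas.comp (measurable_id.prodMk measurable_const))
  have h1 := hffairOpt (fun x s => sel s (fstar x s)) hoptm (fun x s => hselT s _) hfair
  have h2 := penalized_eq μ X S Y hX hS hY A hYbd hπ ℓ z fstar hfstarMeas hfstarBd hreg lam
    (fun x s => sel s (fstar x s)) hoptm (hgA _ fun x s => hselT s _)
  have h3 := penalized_eq μ X S Y hX hS hY A hYbd hπ ℓ z fstar hfstarMeas hfstarBd hreg lam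
    g hg (hgA g hgT)
  have h4 : ∑ s, ∫ ω, score (μ (S ⁻¹' {s})).toReal z ℓ (lam s) (g (X ω) s) (fstar (X ω) s)
        ∂(μ[|S ⁻¹' {s}]) ≤ ∑ s, ∫ ω, score (μ (S ⁻¹' {s})).toReal z ℓ (lam s)
        (sel s (fstar (X ω) s)) (fstar (X ω) s) ∂(μ[|S ⁻¹' {s}]) := by
    refine Finset.sum_le_sum fun s _ => integral_mono ?_ ?_ fun ω => hselmax s _ _ (hgT _ _)
    · exact integrable_score _ _ z ℓ (lam s) A _ (hW s) (hWA s) (FairReg.grid A K)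
        (fun ω => g (X ω) s) (hg.comp (hX.prodMk measurable_const)) (fun ω => hgT _ _)
    · exact integrable_score _ _ z ℓ (lam s) A _ (hW s) (hWA s) (FairReg.grid A K)
        (fun ω => sel s (fstar (X ω) s)) ((hselm s).comp (hW s)) (fun ω => hselT s _)
  -- both penalties vanish, by fairness
  have h5 : ∑ s, ∑ m, lam s m *
      (FairReg.condProb μ S s {ω | ffair (X ω) s ≤ z m} - ℓ m) = 0 := by
    simp [hffairFair]
  have h6 : ∑ s, ∑ m, lam s m *
      (FairReg.condProb μ S s {ω | sel s (fstar (X ω) s) ≤ z m} - ℓ m) = 0 := by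
    simp [hfair]
  linarith
end
end

section
/- There exists an absolute constant C > 0 such that R(f*_{(ℓ,𝒵)-fair}) − R(f̃) ≤ C A² / K, where f*_{(ℓ,𝒵)-fair} is the risk-minimizer of R over (ℓ,𝒵)-fair predictors in the discretized class ℱ_K and f̃ is the risk-minimizer of R over (ℓ,𝒵)-fair predictors in the continuous class ℱ. In particular R(f*_{(ℓ,𝒵)-fair}) → R(f̃) as K → +∞. -/
/-!
Rounding `f̃` up to the next grid point gives a competitor in the discretized class. Since every
threshold is itself a grid point, rounding up does not change any of the events `{f̃ ≤ z_m}`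
(`roundUp_le_grid_iff`), so the competitor is still fair. It moves `f̃` by at most the mesh
`2A/(K-1)`, and squared losses of `[-A,A]`-valued quantities are `4A`-Lipschitz in the prediction,
so its risk exceeds that of `f̃` by at most `8A²/(K-1) ≤ 16A²/K` (`risk_sub_le`).

For the limit, a grid-valued fair predictor is also admissible in the continuous class, so its risk
is at least that of `f̃`, and the squeeze theorem applies.
-/

open MeasureTheory ProbabilityTheory Filter Function

noncomputable section

namespace FairReg

/-- The smallest point of `grid A K` that is at least `y`, for `y ∈ [-A, A]` and `2 ≤ K`. -/
def roundUp (A : ℝ) (K : ℕ) (y : ℝ) : ℝ :=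
  -A + 2 * A * (⌈(y + A) * ((K : ℝ) - 1) / (2 * A)⌉₊ : ℝ) / ((K : ℝ) - 1)

lemma measurable_roundUp (A : ℝ) (K : ℕ) : Measurable (roundUp A K) := by
  have h : Measurable fun y : ℝ => (⌈(y + A) * ((K : ℝ) - 1) / (2 * A)⌉₊ : ℝ) :=
    measurable_from_nat.comp (Nat.measurable_ceil.comp (by fun_prop))
  unfold roundUp
  fun_prop

lemma cast_sub_one_pos {K : ℕ} (hK : 2 ≤ K) : (0 : ℝ) < (K : ℝ) - 1 := by
  have : (2 : ℝ) ≤ K := by exact_mod_cast hK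
  linarith

lemma grid_subset_Icc {A : ℝ} (hA : 0 < A) {K : ℕ} (hK : 2 ≤ K) {y : ℝ} (hy : y ∈ grid A K) :
    y ∈ Set.Icc (-A) A := by
  have hn := cast_sub_one_pos hK
  obtain ⟨k, hk, rfl⟩ := Finset.mem_image.1 hy
  have hk' : (k : ℝ) + 1 ≤ K := by exact_mod_cast Finset.mem_range.1 hk
  have h0 : 0 ≤ 2 * A * (k : ℝ) / ((K : ℝ) - 1) := by positivity
  have h1 : 2 * A * (k : ℝ) / ((K : ℝ) - 1) ≤ 2 * A := by
    rw [div_le_iff₀ hn]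
    exact mul_le_mul_of_nonneg_left (by linarith) (by linarith)
  constructor <;> linarith

lemma roundUp_mem_grid {A : ℝ} (hA : 0 < A) {K : ℕ} (hK : 2 ≤ K) {y : ℝ}
    (hy : y ∈ Set.Icc (-A) A) : roundUp A K y ∈ grid A K := by
  have hn := cast_sub_one_pos hK
  refine Finset.mem_image.2 ⟨_, Finset.mem_range.2 ?_, rfl⟩
  have h : ⌈(y + A) * ((K : ℝ) - 1) / (2 * A)⌉₊ ≤ K - 1 := by
    rw [Nat.ceil_le, Nat.cast_sub (by omega), div_le_iff₀ (by positivity), Nat.cast_one, mul_comm]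
    exact mul_le_mul_of_nonneg_left (by linarith [hy.2]) hn.le
  omega

/-- Rounding up to the grid preserves every sublevel event whose threshold is a grid point. -/
lemma roundUp_le_grid_iff {A : ℝ} (hA : 0 < A) {K : ℕ} (hK : 2 ≤ K) {y z : ℝ}
    (hz : z ∈ grid A K) : roundUp A K y ≤ z ↔ y ≤ z := by
  have hn := cast_sub_one_pos hK
  obtain ⟨k, -, rfl⟩ := Finset.mem_image.1 hz
  have h2A : 0 < 2 * A := by positivity
  rw [roundUp, add_le_add_iff_left, div_le_div_iff_of_pos_right hn, mul_le_mul_iff_right₀ h2A,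
    Nat.cast_le, Nat.ceil_le, div_le_iff₀ h2A, ← le_div_iff₀ hn, mul_comm (k : ℝ)]
  constructor <;> intro h <;> linarith

lemma abs_roundUp_sub_le {A : ℝ} (hA : 0 < A) {K : ℕ} (hK : 2 ≤ K) {y : ℝ}
    (hy : y ∈ Set.Icc (-A) A) : |roundUp A K y - y| ≤ 2 * A / ((K : ℝ) - 1) := by
  have hn := cast_sub_one_pos hK
  set c := (y + A) * ((K : ℝ) - 1) / (2 * A) with hc
  have hc0 : 0 ≤ c := div_nonneg (mul_nonneg (by linarith [hy.1]) hn.le) (by positivity)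
  have hyc : roundUp A K y - y = 2 * A / ((K : ℝ) - 1) * ((⌈c⌉₊ : ℝ) - c) := by
    rw [roundUp, ← hc, hc]
    field_simp
    ring
  have h1 := Nat.le_ceil c
  have h2 := Nat.ceil_lt_add_one hc0
  rw [hyc, abs_of_nonneg (mul_nonneg (by positivity) (by linarith))]
  exact mul_le_of_le_one_right (by positivity) (by linarith)

/-- The squared risk is `4A`-Lipschitz for the sup distance between `[-A,A]`-valued predictors. -/
lemma risk_sub_risk_le {Ω 𝒮 : Type*} [MeasurableSpace Ω] [MeasurableSpace 𝒮]
    {μ : Measure Ω} [IsProbabilityMeasure μ] {d : ℕ} {X : Ω → Fin d → ℝ} {S : Ω → 𝒮} {Y : Ω → ℝ}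
    (hX : Measurable X) (hS : Measurable S) (hY : Measurable Y) {A : ℝ}
    (hYA : ∀ᵐ ω ∂μ, |Y ω| ≤ A) {f g : (Fin d → ℝ) → 𝒮 → ℝ}
    (hf : Measurable (uncurry f)) (hg : Measurable (uncurry g))
    (hfA : ∀ x s, f x s ∈ Set.Icc (-A) A) (hgA : ∀ x s, g x s ∈ Set.Icc (-A) A)
    {δ : ℝ} (hfg : ∀ x s, |g x s - f x s| ≤ δ) :
    risk μ X S Y g - risk μ X S Y f ≤ 4 * A * δ := by
  have hint : ∀ h : (Fin d → ℝ) → 𝒮 → ℝ, Measurable (uncurry h) →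
      (∀ x s, h x s ∈ Set.Icc (-A) A) →
      Integrable (fun ω => (Y ω - h (X ω) (S ω)) ^ 2) μ := by
    intro h hh hhA
    have hm : Measurable fun ω => h (X ω) (S ω) := hh.comp (hX.prodMk hS)
    refine Integrable.of_bound ((hY.sub hm).pow_const 2).aestronglyMeasurable ((2 * A) ^ 2) ?_
    filter_upwards [hYA] with ω hω
    obtain ⟨h1, h2⟩ := abs_le.1 hω
    obtain ⟨h3, h4⟩ := hhA (X ω) (S ω)
    rw [Real.norm_eq_abs, abs_of_nonneg (sq_nonneg _)]
    exact sq_le_sq' (by linarith) (by linarith)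
  rw [risk, risk, ← integral_sub (hint g hg hgA) (hint f hf hfA)]
  have hle : ∫ ω, ((Y ω - g (X ω) (S ω)) ^ 2 - (Y ω - f (X ω) (S ω)) ^ 2) ∂μ
      ≤ ∫ _, 4 * A * δ ∂μ := by
    refine integral_mono_ae ((hint g hg hgA).sub (hint f hf hfA)) (integrable_const _) ?_
    filter_upwards [hYA] with ω hω
    obtain ⟨h1, h2⟩ := abs_le.1 hω
    obtain ⟨h3, h4⟩ := hfA (X ω) (S ω)
    obtain ⟨h5, h6⟩ := hgA (X ω) (S ω)
    have hsum : |g (X ω) (S ω) + f (X ω) (S ω) - 2 * Y ω| ≤ 4 * A :=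
      abs_le.2 ⟨by linarith, by linarith⟩
    calc (Y ω - g (X ω) (S ω)) ^ 2 - (Y ω - f (X ω) (S ω)) ^ 2
        = (g (X ω) (S ω) + f (X ω) (S ω) - 2 * Y ω) * (g (X ω) (S ω) - f (X ω) (S ω)) := by ring
      _ ≤ |g (X ω) (S ω) + f (X ω) (S ω) - 2 * Y ω| * |g (X ω) (S ω) - f (X ω) (S ω)| := by
          rw [← abs_mul]
          exact le_abs_self _
      _ ≤ 4 * A * δ :=
          mul_le_mul hsum (hfg _ _) (abs_nonneg _) (by linarith)
  simpa using hle

/-- A fair grid-valued risk-minimizer loses at most `16 A² / K` against any fair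
`[-A,A]`-valued predictor `f`: compare it with `f` rounded up to the grid. -/
lemma risk_sub_le {Ω 𝒮 : Type*} [MeasurableSpace Ω] [MeasurableSpace 𝒮]
    {μ : Measure Ω} [IsProbabilityMeasure μ] {d : ℕ} {X : Ω → Fin d → ℝ} {S : Ω → 𝒮} {Y : Ω → ℝ}
    (hX : Measurable X) (hS : Measurable S) (hY : Measurable Y) {A : ℝ} (hA : 0 < A)
    (hYA : ∀ᵐ ω ∂μ, |Y ω| ≤ A) {M : ℕ} {ℓ z : Fin M → ℝ} {f : (Fin d → ℝ) → 𝒮 → ℝ}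
    (hf : Measurable (uncurry f)) (hfA : ∀ x s, f x s ∈ Set.Icc (-A) A)
    (hfair : ∀ s m, condProb μ S s {ω | f (X ω) s ≤ z m} = ℓ m)
    {K : ℕ} (hK : 2 ≤ K) (hz : ∀ m, z m ∈ grid A K) {fK : (Fin d → ℝ) → 𝒮 → ℝ}
    (hmin : ∀ g : (Fin d → ℝ) → 𝒮 → ℝ, Measurable (uncurry g) →
      (∀ x s, g x s ∈ grid A K) →
      (∀ s m, condProb μ S s {ω | g (X ω) s ≤ z m} = ℓ m) →
      risk μ X S Y fK ≤ risk μ X S Y g) :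
    risk μ X S Y fK - risk μ X S Y f ≤ 16 * A ^ 2 / K := by
  have hn := cast_sub_one_pos hK
  have hK' : (2 : ℝ) ≤ K := by exact_mod_cast hK
  have hgm : Measurable (uncurry fun x s => roundUp A K (f x s)) :=
    (measurable_roundUp A K).comp hf
  have hg : ∀ x s, roundUp A K (f x s) ∈ grid A K := fun x s => roundUp_mem_grid hA hK (hfA x s)
  have h1 := hmin (fun x s => roundUp A K (f x s)) hgm hg (fun s m => by
    simpa only [roundUp_le_grid_iff hA hK (hz m)] using hfair s m)
  have h2 := risk_sub_risk_le hX hS hY hYA hf hgm hfA (fun x s => grid_subset_Icc hA hK (hg x s))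
    (fun x s => abs_roundUp_sub_le hA hK (hfA x s))
  have h3 : 4 * A * (2 * A / ((K : ℝ) - 1)) ≤ 16 * A ^ 2 / K := by
    rw [← mul_div_assoc, div_le_div_iff₀ hn (by linarith)]
    nlinarith [mul_nonneg (sq_nonneg A) (sub_nonneg.2 hK')]
  linarith

end FairReg

/-- Cost of discretization. There is an absolute constant `C > 0` such that
the risk of the optimal `(ℓ,𝒵)`-fair discretized predictor exceeds the risk of the optimal
`(ℓ,𝒵)`-fair continuous predictor by at most `C A² / K`; in particular the former risk
converges to the latter as `K → ∞` (along sizes `K` for which the thresholds belong to the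
grid, as assumed). -/
theorem cost_of_discretization :
    ∃ C : ℝ, 0 < C ∧
      ∀ (Ω 𝒮 : Type) (_ : MeasurableSpace Ω) (_ : Fintype 𝒮) (_ : Nonempty 𝒮)
        (_ : MeasurableSpace 𝒮) (_ : MeasurableSingletonClass 𝒮)
        (μ : Measure Ω) (_ : IsProbabilityMeasure μ)
        (d : ℕ) (X : Ω → Fin d → ℝ) (S : Ω → 𝒮) (Y : Ω → ℝ),
        Measurable X → Measurable S → Measurable Y →
        ∀ (A : ℝ), 0 < A → (∀ᵐ ω ∂μ, |Y ω| ≤ A) →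
        (∀ s : 𝒮, 0 < (μ (S ⁻¹' {s})).toReal) →
        ∀ (M : ℕ) (ℓ : Fin M → ℝ) (z : Fin M → ℝ),
        1 ≤ M → (∀ m, ℓ m ∈ Set.Ioo (0 : ℝ) 1) → StrictMono ℓ → StrictMono z →
        -- `ftil = f̃` is a risk-minimizer over `(ℓ,𝒵)`-fair predictors in the
        -- continuous class `ℱ` (measurable, `[-A,A]`-valued)
        ∀ (ftil : (Fin d → ℝ) → 𝒮 → ℝ),
        Measurable (Function.uncurry ftil) →
        (∀ x s, ftil x s ∈ Set.Icc (-A) A) →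
        (∀ s m, FairReg.condProb μ S s {ω | ftil (X ω) s ≤ z m} = ℓ m) →
        (∀ g : (Fin d → ℝ) → 𝒮 → ℝ, Measurable (Function.uncurry g) →
          (∀ x s, g x s ∈ Set.Icc (-A) A) →
          (∀ s m, FairReg.condProb μ S s {ω | g (X ω) s ≤ z m} = ℓ m) →
          FairReg.risk μ X S Y ftil ≤ FairReg.risk μ X S Y g) →
        -- main bound: for every grid size `K` with thresholds on the grid, and every
        -- risk-minimizer `fK = f*_{(ℓ,𝒵)-fair}` over `(ℓ,𝒵)`-fair predictors in `ℱ_K`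
        (∀ (K : ℕ), 2 ≤ K → (∀ m, z m ∈ FairReg.grid A K) →
          ∀ (fK : (Fin d → ℝ) → 𝒮 → ℝ),
          Measurable (Function.uncurry fK) →
          (∀ x s, fK x s ∈ FairReg.grid A K) →
          (∀ s m, FairReg.condProb μ S s {ω | fK (X ω) s ≤ z m} = ℓ m) →
          (∀ g : (Fin d → ℝ) → 𝒮 → ℝ, Measurable (Function.uncurry g) →
            (∀ x s, g x s ∈ FairReg.grid A K) →
            (∀ s m, FairReg.condProb μ S s {ω | g (X ω) s ≤ z m} = ℓ m) →
            FairReg.risk μ X S Y fK ≤ FairReg.risk μ X S Y g) →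
          FairReg.risk μ X S Y fK - FairReg.risk μ X S Y ftil ≤ C * A ^ 2 / K)
        ∧
        -- consequence: `R(f*_{(ℓ,𝒵)-fair}) → R(f̃)` as `K → ∞`
        (∀ F : ℕ → (Fin d → ℝ) → 𝒮 → ℝ,
          (∀ K, 2 ≤ K → (∀ m, z m ∈ FairReg.grid A K) →
            Measurable (Function.uncurry (F K)) ∧
            (∀ x s, F K x s ∈ FairReg.grid A K) ∧
            (∀ s m, FairReg.condProb μ S s {ω | F K (X ω) s ≤ z m} = ℓ m) ∧
            (∀ g : (Fin d → ℝ) → 𝒮 → ℝ, Measurable (Function.uncurry g) →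
              (∀ x s, g x s ∈ FairReg.grid A K) →
              (∀ s m, FairReg.condProb μ S s {ω | g (X ω) s ≤ z m} = ℓ m) →
              FairReg.risk μ X S Y (F K) ≤ FairReg.risk μ X S Y g)) →
          Filter.Tendsto (fun K => FairReg.risk μ X S Y (F K))
            (Filter.atTop ⊓ Filter.principal
              {K : ℕ | 2 ≤ K ∧ ∀ m, z m ∈ FairReg.grid A K})
            (nhds (FairReg.risk μ X S Y ftil))) := by
  refine ⟨16, by norm_num, ?_⟩
  intro Ω 𝒮 _ _ _ _ _ μ _ d X S Y hX hS hY A hA hYA _ M ℓ z _ _ _ _ ftil hf hfA hfair hopt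
  refine ⟨fun K hK hz fK _ _ _ hmin =>
    FairReg.risk_sub_le hX hS hY hA hYA hf hfA hfair hK hz hmin, fun F hF => ?_⟩
  have hlim : Tendsto (fun K : ℕ => FairReg.risk μ X S Y ftil + 16 * A ^ 2 / (K : ℝ)) atTop
      (nhds (FairReg.risk μ X S Y ftil)) := by
    simpa using (tendsto_const_div_atTop_nhds_zero_nat (16 * A ^ 2)).const_add
      (FairReg.risk μ X S Y ftil)
  refine tendsto_of_tendsto_of_tendsto_of_le_of_le' tendsto_const_nhds
    (hlim.mono_left inf_le_left) ?_ ?_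
  · refine eventually_inf_principal.2 (Eventually.of_forall ?_)
    rintro K ⟨hK, hz⟩
    obtain ⟨hm, hg, hfa, -⟩ := hF K hK hz
    exact hopt _ hm (fun x s => FairReg.grid_subset_Icc hA hK (hg x s)) hfa
  · refine eventually_inf_principal.2 (Eventually.of_forall ?_)
    rintro K ⟨hK, hz⟩
    obtain ⟨-, -, -, hmin⟩ := hF K hK hz
    have := FairReg.risk_sub_le hX hS hY hA hYA hf hfA hfair hK hz hmin
    linarith
end
end

section
/- Under the continuity assumption, there exists λ* ∈ Δ_M (i.e., with Σ_{s∈𝒮} λ*_{s,m} = 0 for every m) such that a risk-minimizer f*_{𝒵-fair} of R over all 𝒵-DP-fair predictors in ℱ_K exists and admits the pointwise form f*_{𝒵-fair}(x,s) ∈ argmin_{y∈𝒴_K} { π_s (y − f*(x,s))² + ⟨λ*_s, a(y)⟩ }; moreover λ* can be chosen as a minimizer over λ ∈ Δ_M of Σ_{s∈𝒮} 𝔼_s[ max_{y∈𝒴_K} Φ^𝒵_{s,λ}(X,y) ], where Φ^𝒵_{s,λ}(x,y) := −π_s (y − f*(x,s))² − ⟨λ_s, a(y)⟩. -/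
/-!
Lagrangian duality. Write `H(λ) = ∑ s, 𝔼_s[max_y (-π_s (y - f*)² - ⟨λ_s, a(y)⟩)]` for the dual
objective.

* `H` attains its minimum over `Δ_M` (`exists_dual_min`), because it is continuous and coercive as a
  function of the penalties `⟨λ_s, a(y)⟩`.
* Let `λ*` be a minimizer, `f_λ` a measurable pointwise argmin for the multiplier `λ` (`exists_sel`),
  and `v ∈ Δ_M`. Inserting `f_{λ* + t v}` into the maximum defining `H(λ*)` gives
  `H(λ*) ≥ H(λ* + t v) + t ∑ s, 𝔼_s⟨v_s, a(f_{λ* + t v})⟩` (`dual_variation`), so by minimality the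
  last sum is nonpositive for `t > 0`. As `f*(X,s)` has no atoms under `ℙ_s`, the argmin at `λ*` is
  almost surely unique (`ae_no_ties`), and letting `t → 0` replaces `f_{λ* + t v}` by `f_{λ*}`
  (`tendsto_penalty`). Taking `v` supported on two groups and one threshold shows that
  `ℙ_s(f_{λ*} ≤ z_m)` does not depend on `s`, i.e. `f_{λ*}` is fair.
* The risk is a constant plus `∑ s, π_s 𝔼_s[(f - f*)²]` (`risk_eq`, `total_integral`). For a fair
  predictor `∑ s, 𝔼_s⟨λ*_s, a(f)⟩ = 0`, so its risk is, up to the constant, the expectation of the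
  Lagrangian which `f_{λ*}` minimizes pointwise.
-/

open MeasureTheory ProbabilityTheory Filter Function

noncomputable section

namespace FairReg

/-! ### Finite maxima and measurable selection -/

/-- Measurable selection of a minimizer over a finite set. Measurability of the minimal value is
carried along because it is what the induction on `G` needs. -/
lemma exists_sel {α : Type*} [MeasurableSpace α] (G : Finset ℝ) (hG : G.Nonempty)
    (c : α → ℝ → ℝ) (hc : ∀ y ∈ G, Measurable fun x => c x y) :
    ∃ σ : α → ℝ, Measurable σ ∧ Measurable (fun x => c x (σ x)) ∧
      ∀ x, σ x ∈ G ∧ ∀ y ∈ G, c x (σ x) ≤ c x y := by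
  classical
  induction hG using Finset.Nonempty.cons_induction with
  | singleton a =>
    exact ⟨fun _ => a, measurable_const, hc a (by simp), fun x => by simp⟩
  | cons a s ha hs ih =>
    obtain ⟨σ, h1, h2, h3⟩ := ih (fun y hy => hc y (by simp [hy]))
    have hca : Measurable fun x => c x a := hc a (by simp)
    have hset : MeasurableSet {x | c x a ≤ c x (σ x)} := measurableSet_le hca h2
    refine ⟨fun x => if c x a ≤ c x (σ x) then a else σ x,
      Measurable.ite hset measurable_const h1, ?_, fun x => ?_⟩
    · have heq : (fun x => c x (if c x a ≤ c x (σ x) then a else σ x))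
          = fun x => if c x a ≤ c x (σ x) then c x a else c x (σ x) := by
        funext x
        split_ifs <;> rfl
      beta_reduce
      rw [heq]
      exact Measurable.ite hset hca h2
    · obtain ⟨hm, hle⟩ := h3 x
      beta_reduce
      split_ifs with h
      · refine ⟨by simp, fun y hy => ?_⟩
        rcases Finset.mem_cons.1 hy with rfl | hy
        · exact le_rfl
        · exact h.trans (hle y hy)
      · refine ⟨by simp [hm], fun y hy => ?_⟩
        rcases Finset.mem_cons.1 hy with rfl | hy
        · exact (not_le.1 h).le
        · exact hle y hy

lemma le_gmax {G : Finset ℝ} {g : ℝ → ℝ} {y : ℝ} (hy : y ∈ G) : g y ≤ gmax G g :=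
  le_csSup (G.finite_toSet.image g).bddAbove (Set.mem_image_of_mem g hy)

lemma gmax_le {G : Finset ℝ} (hG : G.Nonempty) {g : ℝ → ℝ} {b : ℝ} (h : ∀ y ∈ G, g y ≤ b) :
    gmax G g ≤ b := by
  refine csSup_le (Set.Nonempty.image g hG) ?_
  rintro _ ⟨y, hy, rfl⟩
  exact h y hy

/-! ### The dual term of a single group -/

section single
variable {Ω : Type*} [MeasurableSpace Ω] {P : Measure Ω} [IsProbabilityMeasure P]
  {F : Ω → ℝ} {A p : ℝ} {G : Finset ℝ}

lemma sq_dev_le {y t : ℝ} (hy : |y| ≤ A) (ht : |t| ≤ A) : (y - t) ^ 2 ≤ 4 * A ^ 2 := by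
  rw [abs_le] at hy ht
  nlinarith

lemma integrable_gmax (hF : Measurable F) (hFb : ∀ᵐ ω ∂P, |F ω| ≤ A) (hp : 0 ≤ p)
    (hG : G.Nonempty) (hGb : ∀ y ∈ G, |y| ≤ A) (c : ℝ → ℝ) :
    Integrable (fun ω => gmax G fun y => -p * (y - F ω) ^ 2 - c y) P := by
  obtain ⟨B, hB⟩ := (G.finite_toSet.image fun y => |c y|).bddAbove
  have hB : ∀ y ∈ G, |c y| ≤ B := fun y hy => hB (Set.mem_image_of_mem _ hy)
  have hm : Measurable fun ω => gmax G fun y => -p * (y - F ω) ^ 2 - c y := by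
    have : (fun ω => gmax G fun y => -p * (y - F ω) ^ 2 - c y)
        = G.sup' hG (fun y ω => -p * (y - F ω) ^ 2 - c y) := by
      ext ω
      rw [Finset.sup'_apply, Finset.sup'_eq_csSup_image]
      rfl
    rw [this]
    exact Finset.measurable_sup' hG fun y _ => by fun_prop
  refine Integrable.of_bound hm.aestronglyMeasurable (p * (4 * A ^ 2) + B) ?_
  filter_upwards [hFb] with ω hω
  rw [Real.norm_eq_abs, abs_le]
  obtain ⟨y, hy⟩ := hG
  have key : ∀ y ∈ G, p * (y - F ω) ^ 2 ≤ p * (4 * A ^ 2) := fun y hy =>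
    mul_le_mul_of_nonneg_left (sq_dev_le (hGb y hy) hω) hp
  constructor
  · refine le_trans ?_ (le_gmax hy)
    have := key y hy
    have := (abs_le.1 (hB y hy)).2
    linarith
  · refine gmax_le ⟨y, hy⟩ fun y hy => ?_
    have := (abs_le.1 (hB y hy)).1
    have h1 : 0 ≤ p * (y - F ω) ^ 2 := by positivity
    have h2 : 0 ≤ p * (4 * A ^ 2) := by positivity
    linarith

/-- Keeping a single grid point `y` in the maximum bounds one group's dual term from below. -/
lemma dual_lower (hF : Measurable F) (hFb : ∀ᵐ ω ∂P, |F ω| ≤ A) (hp : 0 ≤ p)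
    (hG : G.Nonempty) (hGb : ∀ y ∈ G, |y| ≤ A) (c : ℝ → ℝ) {y : ℝ} (hy : y ∈ G) :
    -(p * (4 * A ^ 2)) - c y ≤ ∫ ω, gmax G (fun y => -p * (y - F ω) ^ 2 - c y) ∂P := by
  have := integral_mono_ae (integrable_const (μ := P) (-(p * (4 * A ^ 2)) - c y))
    (integrable_gmax hF hFb hp hG hGb c) (by
      filter_upwards [hFb] with ω hω
      refine le_trans ?_ (le_gmax hy)
      have := mul_le_mul_of_nonneg_left (sq_dev_le (hGb y hy) hω) hp
      linarith)
  simpa using this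

/-- One-sided form of the fact that the expected maximum is `1`-Lipschitz in the penalty `c` for the
sup norm on the grid; with `ε = 0` it also shows that only the values of `c` on the grid matter. -/
lemma dual_lipschitz (hF : Measurable F) (hFb : ∀ᵐ ω ∂P, |F ω| ≤ A) (hp : 0 ≤ p)
    (hG : G.Nonempty) (hGb : ∀ y ∈ G, |y| ≤ A) (c c' : ℝ → ℝ) {ε : ℝ}
    (h : ∀ y ∈ G, c' y ≤ c y + ε) :
    ∫ ω, gmax G (fun y => -p * (y - F ω) ^ 2 - c y) ∂P
      ≤ ∫ ω, gmax G (fun y => -p * (y - F ω) ^ 2 - c' y) ∂P + ε := by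
  have := integral_mono (integrable_gmax hF hFb hp hG hGb c)
    ((integrable_gmax hF hFb hp hG hGb c').add (integrable_const (μ := P) ε)) (by
      intro ω
      refine gmax_le hG fun y hy => ?_
      have := le_gmax (g := fun y => -p * (y - F ω) ^ 2 - c' y) hy
      have := h y hy
      simp only [Pi.add_apply]
      linarith)
  rw [integral_add' (integrable_gmax hF hFb hp hG hGb c') (integrable_const _)] at this
  simpa using this

/-- A continuous distribution function has no atoms. -/
lemma prob_eq_zero (hF : Measurable F) (hc : Continuous fun t : ℝ => (P {ω | F ω ≤ t}).toReal)
    (t : ℝ) : P {ω | F ω = t} = 0 := by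
  have hle : ∀ r < t, P.real {ω | F ω = t}
      ≤ (P {ω | F ω ≤ t}).toReal - (P {ω | F ω ≤ r}).toReal := by
    intro r hr
    have hd : Disjoint {ω | F ω = t} {ω | F ω ≤ r} := by
      rw [Set.disjoint_left]
      intro ω h1 h2
      simp only [Set.mem_ofPred_eq] at h1 h2
      linarith
    have h1 := measureReal_union (μ := P) hd (measurableSet_le hF measurable_const)
    have h2 : P.real ({ω | F ω = t} ∪ {ω | F ω ≤ r}) ≤ P.real {ω | F ω ≤ t} := by
      refine measureReal_mono ?_
      rintro ω (h | h) <;> simp only [Set.mem_ofPred_eq] at h ⊢ <;> linarith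
    simp only [Measure.real] at h1 h2 ⊢
    linarith
  have hlim : Tendsto (fun r => (P {ω | F ω ≤ t}).toReal - (P {ω | F ω ≤ r}).toReal)
      (nhdsWithin t (Set.Iio t)) (nhds 0) := by
    have := (hc.tendsto t).const_sub ((P {ω | F ω ≤ t}).toReal)
    rw [sub_self] at this
    exact this.mono_left nhdsWithin_le_nhds
  have h0 : P.real {ω | F ω = t} ≤ 0 := by
    refine ge_of_tendsto hlim ?_
    filter_upwards [self_mem_nhdsWithin] with r hr using hle r hr
  exact (measureReal_eq_zero_iff).1 (le_antisymm h0 measureReal_nonneg)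

/-- Two distinct grid points have equal penalized cost for a single value of `F` only, because the
quadratic terms in `F` cancel; without atoms the penalized argmin is thus almost surely unique. -/
lemma ae_no_ties (hF : Measurable F)
    (hc : Continuous fun t : ℝ => (P {ω | F ω ≤ t}).toReal) (hp : 0 < p) (c : ℝ → ℝ) :
    ∀ᵐ ω ∂P, ∀ y ∈ G, ∀ y' ∈ G, p * (y - F ω) ^ 2 + c y = p * (y' - F ω) ^ 2 + c y' → y = y' := by
  rw [eventually_all_finset]
  intro y _
  rw [eventually_all_finset]
  intro y' _
  by_cases hyy : y = y'
  · exact Eventually.of_forall fun _ _ => hyy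
  have h0 := prob_eq_zero hF hc ((p * (y ^ 2 - y' ^ 2) + c y - c y') / (2 * p * (y - y')))
  have h1 : ∀ᵐ ω ∂P, F ω ≠ (p * (y ^ 2 - y' ^ 2) + c y - c y') / (2 * p * (y - y')) := by
    rw [ae_iff]; simpa using h0
  filter_upwards [h1] with ω hω heq
  have hne : y - y' ≠ 0 := sub_ne_zero.2 hyy
  exact absurd (by rw [eq_div_iff (by positivity)]; linarith) hω

end single

/-! ### Existence of a dual minimizer -/

/-- Existence of a minimizer of the dual objective over `Δ_M`. In `λ` the objective need not be
coercive: thresholds falling in the same gap of the grid give directions in which it is constant. It is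
coercive in the penalties `u s y = ⟨λ_s, a(y)⟩`, which range over a finite-dimensional subspace: the
point `y₀`, which carries no penalty, bounds every group's term below, so a bound on the objective
bounds each `u s y` from below, and `∑ s, u s y = 0` turns this into a bound from above. -/
lemma exists_dual_min {𝒮 : Type*} [Fintype 𝒮] [Nonempty 𝒮] {M : ℕ} (G : Finset ℝ)
    (a : ℝ → Fin M → ℝ) (D : 𝒮 → (ℝ → ℝ) → ℝ) {C : ℝ}
    (hlow : ∀ s c, ∀ y ∈ G, -C - c y ≤ D s c)
    (hlip : ∀ s c c' (ε : ℝ), (∀ y ∈ G, c' y ≤ c y + ε) → D s c ≤ D s c' + ε)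
    {y₀ : ℝ} (hy₀ : y₀ ∈ G) (ha : ∀ m, a y₀ m = 0) :
    ∃ lam : 𝒮 → Fin M → ℝ, (∀ m, ∑ s, lam s m = 0) ∧
      ∀ lam' : 𝒮 → Fin M → ℝ, (∀ m, ∑ s, lam' s m = 0) →
        ∑ s, D s (fun y => ∑ m, lam s m * a y m) ≤ ∑ s, D s (fun y => ∑ m, lam' s m * a y m) := by
  classical
  -- `T λ` records the penalties `⟨λ_s, a(y)⟩` on the grid
  let T : (𝒮 → Fin M → ℝ) →ₗ[ℝ] (𝒮 → G → ℝ) :=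
    { toFun := fun l s y => ∑ m, l s m * a y m
      map_add' := fun l l' => by
        ext s y; simp [add_mul, Finset.sum_add_distrib]
      map_smul' := fun r l => by
        ext s y; simp [mul_assoc, Finset.mul_sum] }
  let Δ : Submodule ℝ (𝒮 → Fin M → ℝ) :=
    { carrier := {l | ∀ m, ∑ s, l s m = 0}
      zero_mem' := by simp
      add_mem' := fun {l l'} h h' m => by
        simp only [Set.mem_ofPred_eq] at h h'
        simp [Finset.sum_add_distrib, h m, h' m]
      smul_mem' := fun r l h m => by
        simp only [Set.mem_ofPred_eq] at h
        simp [← Finset.mul_sum, h m] }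
  let U := Δ.map T
  let ext : (G → ℝ) → ℝ → ℝ := fun u y => if h : y ∈ G then u ⟨y, h⟩ else 0
  have hext : ∀ (u : G → ℝ) (y : ℝ) (h : y ∈ G), ext u y = u ⟨y, h⟩ := fun u y h => by
    simp [ext, h]
  let H : (𝒮 → G → ℝ) → ℝ := fun u => ∑ s, D s (ext (u s))
  have hHT : ∀ l, H (T l) = ∑ s, D s (fun y => ∑ m, l s m * a y m) := by
    intro l
    refine Finset.sum_congr rfl fun s _ => le_antisymm ?_ ?_
    · have := hlip s (ext (T l s)) (fun y => ∑ m, l s m * a y m) 0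
        (fun y hy => by rw [hext _ y hy]; simp [T])
      simpa using this
    · have := hlip s (fun y => ∑ m, l s m * a y m) (ext (T l s)) 0
        (fun y hy => by rw [hext _ y hy]; simp [T])
      simpa using this
  have hHcont : Continuous H := by
    refine continuous_finsetSum _ fun s _ => ?_
    have hL : LipschitzWith 1 fun u : G → ℝ => D s (ext u) := by
      refine LipschitzWith.of_le_add fun u u' => ?_
      refine hlip s _ _ _ fun y hy => ?_
      rw [hext _ y hy, hext _ y hy]
      have := dist_le_pi_dist u u' ⟨y, hy⟩
      rw [Real.dist_eq, abs_le] at this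
      linarith [this.1]
    exact hL.continuous.comp (continuous_apply s)
  set n : ℝ := ((Fintype.card 𝒮 : ℕ) : ℝ) with hn
  have hn1 : 1 ≤ n := by
    rw [hn]; exact_mod_cast Fintype.card_pos
  set B : ℝ := H 0 + n * C with hBdef
  have hbd : ∀ u ∈ U, H u ≤ H 0 → ‖u‖ ≤ n * B := by
    rintro _ ⟨l, hl, rfl⟩ hle
    have hl : ∀ m, ∑ s, l s m = 0 := hl
    have hge : ∀ s, -C ≤ D s (ext (T l s)) := fun s => by
      have := hlow s (ext (T l s)) y₀ hy₀
      rw [hext _ _ hy₀] at this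
      simpa [T, ha] using this
    have hlower : ∀ s (y : G), -(T l s y) ≤ B := by
      intro s y
      have h1 := hlow s (ext (T l s)) y y.2
      rw [hext _ _ y.2] at h1
      have h2 : D s (ext (T l s)) + C ≤ ∑ s', (D s' (ext (T l s')) + C) :=
        Finset.single_le_sum (f := fun s' => D s' (ext (T l s')) + C)
          (fun s' _ => by linarith [hge s']) (Finset.mem_univ s)
      rw [Finset.sum_add_distrib] at h2
      simp only [Finset.sum_const, Finset.card_univ, nsmul_eq_mul] at h2
      have h3 : ∑ s', D s' (ext (T l s')) ≤ H 0 := hle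
      rw [← hn] at h2
      have h4 : -C - T l s y ≤ D s (ext (T l s)) := h1
      linarith
    have hB : 0 ≤ B := by
      have s := Classical.arbitrary 𝒮
      have := hlower s ⟨y₀, hy₀⟩
      simpa [T, ha] using this
    rw [pi_norm_le_iff_of_nonneg (by positivity)]
    intro s
    rw [pi_norm_le_iff_of_nonneg (by positivity)]
    intro y
    have hsum : ∑ s', T l s' y = 0 := by
      simp only [T, LinearMap.coe_mk, AddHom.coe_mk]
      rw [Finset.sum_comm]
      simp [← Finset.sum_mul, hl]
    rw [Real.norm_eq_abs, abs_le]
    constructor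
    · nlinarith [hlower s y]
    · have h2 : T l s y + B ≤ ∑ s', (T l s' y + B) :=
        Finset.single_le_sum (f := fun s' => T l s' y + B)
          (fun s' _ => by linarith [hlower s' y]) (Finset.mem_univ s)
      rw [Finset.sum_add_distrib, hsum] at h2
      simp only [Finset.sum_const, Finset.card_univ, nsmul_eq_mul] at h2
      rw [← hn] at h2
      linarith
  have hcomp : IsCompact (Metric.closedBall (0 : 𝒮 → G → ℝ) (n * B) ∩ (U : Set (𝒮 → G → ℝ))) :=
    (isCompact_closedBall _ _).inter_right U.closed_of_finiteDimensional
  have h0mem : (0 : 𝒮 → G → ℝ) ∈ Metric.closedBall (0 : 𝒮 → G → ℝ) (n * B) ∩ (U : Set _) :=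
    ⟨by simpa using hbd 0 U.zero_mem le_rfl, U.zero_mem⟩
  obtain ⟨u, ⟨_, l, hl, hlu⟩, hmin⟩ := hcomp.exists_isMinOn ⟨0, h0mem⟩ hHcont.continuousOn
  refine ⟨l, hl, fun l' hl' => ?_⟩
  rw [← hHT, ← hHT, hlu]
  have hU : T l' ∈ U := ⟨l', hl', rfl⟩
  by_cases h : H (T l') ≤ H 0
  · exact hmin ⟨by simpa using hbd _ hU h, hU⟩
  · exact (hmin h0mem).trans (not_le.1 h).le

/-! ### Penalties and the first-order condition -/

section penalty
variable {Ω : Type*} [MeasurableSpace Ω] {P : Measure Ω} {M : ℕ} (z : Fin M → ℝ)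

lemma measurable_aInd (m : Fin M) : Measurable fun y => aInd z y m :=
  Measurable.ite measurableSet_Iic measurable_const measurable_const

lemma abs_aInd_le (y : ℝ) (m : Fin M) : |aInd z y m| ≤ 1 := by
  unfold aInd
  split_ifs <;> simp

lemma integrable_aInd [IsProbabilityMeasure P] {h : Ω → ℝ} (hh : Measurable h) (m : Fin M) :
    Integrable (fun ω => aInd z (h ω) m) P :=
  Integrable.of_bound ((measurable_aInd z m).comp hh).aestronglyMeasurable 1
    (Eventually.of_forall fun ω => abs_aInd_le z (h ω) m)

lemma integrable_penalty [IsProbabilityMeasure P] {h : Ω → ℝ} (hh : Measurable h) (v : Fin M → ℝ) :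
    Integrable (fun ω => ∑ m, v m * aInd z (h ω) m) P :=
  integrable_finsetSum _ fun m _ => (integrable_aInd z hh m).const_mul _

lemma integral_aInd {h : Ω → ℝ} (hh : Measurable h) (m : Fin M) :
    ∫ ω, aInd z (h ω) m ∂P = (P {ω | h ω ≤ z m}).toReal := by
  have : (fun ω => aInd z (h ω) m) = Set.indicator {ω | h ω ≤ z m} 1 := by
    ext ω
    simp [aInd, Set.indicator_apply]
  rw [this, integral_indicator_one (measurableSet_le hh measurable_const)]
  rfl

lemma integral_penalty [IsProbabilityMeasure P] {h : Ω → ℝ} (hh : Measurable h) (v : Fin M → ℝ) :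
    ∫ ω, ∑ m, v m * aInd z (h ω) m ∂P = ∑ m, v m * (P {ω | h ω ≤ z m}).toReal := by
  rw [integral_finsetSum _ fun m _ => (integrable_aInd z hh m).const_mul _]
  refine Finset.sum_congr rfl fun m _ => ?_
  rw [integral_const_mul, integral_aInd z hh]

/-- Evaluating the maximum for the multiplier `l` at a maximizer `h` for `l + t v` bounds the change of
the dual term. This replaces differentiability of the dual objective. -/
lemma dual_variation [IsProbabilityMeasure P] {F : Ω → ℝ} {A p : ℝ} {G : Finset ℝ}
    (hF : Measurable F) (hFb : ∀ᵐ ω ∂P, |F ω| ≤ A) (hp : 0 ≤ p)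
    (hG : G.Nonempty) (hGb : ∀ y ∈ G, |y| ≤ A) (l v : Fin M → ℝ) (t : ℝ) {h : Ω → ℝ}
    (hh : Measurable h) (hhG : ∀ ω, h ω ∈ G)
    (hopt : ∀ ω, ∀ y ∈ G, p * (h ω - F ω) ^ 2 + ∑ m, (l m + t * v m) * aInd z (h ω) m
      ≤ p * (y - F ω) ^ 2 + ∑ m, (l m + t * v m) * aInd z y m) :
    ∫ ω, gmax G (fun y => -p * (y - F ω) ^ 2 - ∑ m, (l m + t * v m) * aInd z y m) ∂P
      + t * ∑ m, v m * (P {ω | h ω ≤ z m}).toReal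
      ≤ ∫ ω, gmax G (fun y => -p * (y - F ω) ^ 2 - ∑ m, l m * aInd z y m) ∂P := by
  have hI := integrable_gmax (P := P) hF hFb hp hG hGb fun y => ∑ m, (l m + t * v m) * aInd z y m
  rw [← integral_penalty z hh v, ← integral_const_mul,
    ← integral_add hI ((integrable_penalty z hh v).const_mul t)]
  refine integral_mono (hI.add ((integrable_penalty z hh v).const_mul t))
    (integrable_gmax hF hFb hp hG hGb _) fun ω => ?_
  have h1 : gmax G (fun y => -p * (y - F ω) ^ 2 - ∑ m, (l m + t * v m) * aInd z y m)
      ≤ -p * (h ω - F ω) ^ 2 - ∑ m, (l m + t * v m) * aInd z (h ω) m :=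
    gmax_le hG fun y hy => by linarith [hopt ω y hy]
  have h2 := le_gmax (g := fun y => -p * (y - F ω) ^ 2 - ∑ m, l m * aInd z y m) (hhG ω)
  have h3 : ∑ m, (l m + t * v m) * aInd z (h ω) m
      = ∑ m, l m * aInd z (h ω) m + t * ∑ m, v m * aInd z (h ω) m := by
    rw [Finset.mul_sum, ← Finset.sum_add_distrib]
    exact Finset.sum_congr rfl fun m _ => by ring
  linarith

/-- Since the argmin at `l` is almost surely unique and the grid is finite, an argmin for `l + t n v`
eventually coincides with it almost surely, so the probabilities converge. -/
lemma tendsto_penalty [IsProbabilityMeasure P] {F : Ω → ℝ} {p : ℝ} {G : Finset ℝ} (hF : Measurable F)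
    (hc : Continuous fun t : ℝ => (P {ω | F ω ≤ t}).toReal) (hp : 0 < p)
    (l v : Fin M → ℝ) {t : ℕ → ℝ} (ht : Tendsto t atTop (nhds 0))
    {h : ℕ → Ω → ℝ} (hh : ∀ n, Measurable (h n)) (hhG : ∀ n ω, h n ω ∈ G)
    (hopt : ∀ n ω, ∀ y ∈ G, p * (h n ω - F ω) ^ 2 + ∑ m, (l m + t n * v m) * aInd z (h n ω) m
      ≤ p * (y - F ω) ^ 2 + ∑ m, (l m + t n * v m) * aInd z y m)
    {h₀ : Ω → ℝ} (hh₀ : Measurable h₀) (hh₀G : ∀ ω, h₀ ω ∈ G)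
    (hopt₀ : ∀ ω, ∀ y ∈ G, p * (h₀ ω - F ω) ^ 2 + ∑ m, l m * aInd z (h₀ ω) m
      ≤ p * (y - F ω) ^ 2 + ∑ m, l m * aInd z y m) :
    Tendsto (fun n => ∑ m, v m * (P {ω | h n ω ≤ z m}).toReal) atTop
      (nhds (∑ m, v m * (P {ω | h₀ ω ≤ z m}).toReal)) := by
  refine tendsto_finsetSum _ fun m _ => Tendsto.const_mul _ ?_
  simp only [← integral_aInd z (hh _) m, ← integral_aInd z hh₀ m]
  refine tendsto_integral_of_dominated_convergence (fun _ => 1)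
    (fun n => ((measurable_aInd z m).comp (hh n)).aestronglyMeasurable) (integrable_const _)
    (fun n => Eventually.of_forall fun ω => abs_aInd_le z (h n ω) m) ?_
  filter_upwards [ae_no_ties (G := G) hF hc hp fun y => ∑ m, l m * aInd z y m] with ω hω
  have hev : ∀ᶠ n in atTop, ∀ y ∈ G, y ≠ h₀ ω →
      p * (h₀ ω - F ω) ^ 2 + ∑ m, (l m + t n * v m) * aInd z (h₀ ω) m
        < p * (y - F ω) ^ 2 + ∑ m, (l m + t n * v m) * aInd z y m := by
    rw [eventually_all_finset]
    intro y hy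
    by_cases hne : y = h₀ ω
    · exact Eventually.of_forall fun _ h => absurd hne h
    have hlim : ∀ y, Tendsto (fun n => p * (y - F ω) ^ 2 + ∑ m, (l m + t n * v m) * aInd z y m)
        atTop (nhds (p * (y - F ω) ^ 2 + ∑ m, l m * aInd z y m)) := by
      intro y
      refine Tendsto.const_add _ (tendsto_finsetSum _ fun m _ => Tendsto.mul_const _ ?_)
      simpa using (ht.mul_const (v m)).const_add (l m)
    have hlt := lt_of_le_of_ne (hopt₀ ω y hy)
      fun heq => hne (hω _ (hh₀G ω) y hy heq).symm
    filter_upwards [(hlim (h₀ ω)).eventually_lt (hlim y) hlt] with n hn _ using hn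
  refine tendsto_const_nhds.congr' ?_
  filter_upwards [hev] with n hn
  have : h n ω = h₀ ω := by
    by_contra hne
    exact absurd (hopt n ω _ (hh₀G ω)) (not_le.2 (hn _ (hhG n ω) hne))
  rw [this]

end penalty

/-! ### Total expectation, risk decomposition and the grid -/

section global
variable {Ω 𝒮 : Type*} [MeasurableSpace Ω] [Fintype 𝒮]
    [MeasurableSpace 𝒮] [MeasurableSingletonClass 𝒮]
    {μ : Measure Ω} [IsProbabilityMeasure μ] {d : ℕ}
    {X : Ω → Fin d → ℝ} {S : Ω → 𝒮} {Y : Ω → ℝ} {A : ℝ}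

/-- Law of total expectation over the groups. -/
lemma total_integral (hS : Measurable S) (hπ : ∀ s, 0 < (μ (S ⁻¹' {s})).toReal)
    (φ : Ω → 𝒮 → ℝ) (hφ : Integrable (fun ω => φ ω (S ω)) μ) :
    ∫ ω, φ ω (S ω) ∂μ
      = ∑ s, (μ (S ⁻¹' {s})).toReal * ∫ ω, φ ω s ∂(μ[|S ⁻¹' {s}]) := by
  have hI : ∀ s ∈ Finset.univ,
      Integrable (fun ω => φ ω (S ω)) (μ (S ⁻¹' {s}) • μ[|S ⁻¹' {s}]) := by
    intro s _
    have h0 : μ (S ⁻¹' {s}) ≠ 0 := fun h => by simpa [h] using hπ s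
    exact (hφ.restrict.smul_measure (ENNReal.inv_ne_top.2 h0)).smul_measure (measure_ne_top _ _)
  conv_lhs => rw [← sum_meas_smul_cond_fiber hS μ]
  rw [integral_finsetSum_measure hI]
  refine Finset.sum_congr rfl fun s _ => ?_
  rw [integral_smul_measure, smul_eq_mul]
  congr 1
  refine integral_congr_ae ?_
  filter_upwards [ae_cond_mem (μ := μ) (hS (measurableSet_singleton s))] with ω hω
  rw [show S ω = s from hω]

/-- Excess-risk decomposition: `Y - f*(X,S)` is orthogonal to bounded functions of `(X,S)`. -/
lemma risk_eq (hX : Measurable X) (hS : Measurable S) (hY : Measurable Y)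
    (hYbd : ∀ᵐ ω ∂μ, |Y ω| ≤ A) {fstar : (Fin d → ℝ) → 𝒮 → ℝ}
    (hf : Measurable (Function.uncurry fstar))
    (hfb : ∀ᵐ ω ∂μ, |fstar (X ω) (S ω)| ≤ A)
    (hreg : (fun ω => fstar (X ω) (S ω))
      =ᵐ[μ] μ[Y | MeasurableSpace.comap (fun ω => (X ω, S ω)) inferInstance])
    {g : (Fin d → ℝ) → 𝒮 → ℝ} (hg : Measurable (Function.uncurry g))
    (hgb : ∀ x s, |g x s| ≤ A) :
    Integrable (fun ω => (g (X ω) (S ω) - fstar (X ω) (S ω)) ^ 2) μ ∧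
    risk μ X S Y g = ∫ ω, (Y ω - fstar (X ω) (S ω)) ^ 2 ∂μ
      + ∫ ω, (g (X ω) (S ω) - fstar (X ω) (S ω)) ^ 2 ∂μ := by
  have hXS : Measurable fun ω => (X ω, S ω) := hX.prodMk hS
  have hmle := hXS.comap_le
  let F : Ω → ℝ := fun ω => fstar (X ω) (S ω)
  let h : Ω → ℝ := fun ω => g (X ω) (S ω) - F ω
  have hFm : Measurable F := hf.comp hXS
  have hhm : Measurable h := (hg.comp hXS).sub hFm
  have hhm' : StronglyMeasurable[MeasurableSpace.comap (fun ω => (X ω, S ω)) inferInstance] h :=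
    ((hg.sub hf).comp (comap_measurable fun ω => (X ω, S ω))).stronglyMeasurable
  have hhb : ∀ᵐ ω ∂μ, |h ω| ≤ 2 * A := by
    filter_upwards [hfb] with ω hω
    have := hgb (X ω) (S ω)
    rw [abs_le] at *
    constructor <;> simp only [h, F] <;> linarith [this.1, this.2, hω.1, hω.2]
  have hdb : ∀ᵐ ω ∂μ, |Y ω - F ω| ≤ 2 * A := by
    filter_upwards [hfb, hYbd] with ω hω hω'
    rw [abs_le] at *
    constructor <;> simp only [F] <;> linarith [hω'.1, hω'.2, hω.1, hω.2]
  have hYi : Integrable Y μ := Integrable.of_bound hY.aestronglyMeasurable A hYbd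
  have hFi : Integrable F μ := Integrable.of_bound hFm.aestronglyMeasurable A hfb
  have hhY : Integrable (h * Y) μ :=
    hYi.bdd_mul hhm.aestronglyMeasurable (c := 2 * A) hhb
  have hhF : Integrable (h * F) μ :=
    hFi.bdd_mul hhm.aestronglyMeasurable (c := 2 * A) hhb
  have hh2 : Integrable (fun ω => h ω ^ 2) μ := by
    refine Integrable.of_bound (hhm.pow_const 2).aestronglyMeasurable ((2 * A) ^ 2) ?_
    filter_upwards [hhb] with ω hω
    rw [Real.norm_eq_abs, abs_pow]
    gcongr
  have hd2 : Integrable (fun ω => (Y ω - F ω) ^ 2) μ := by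
    refine Integrable.of_bound ((hY.sub hFm).pow_const 2).aestronglyMeasurable ((2 * A) ^ 2) ?_
    filter_upwards [hdb] with ω hω
    rw [Real.norm_eq_abs, abs_pow]
    gcongr
  have horth : ∫ ω, (h * Y) ω ∂μ = ∫ ω, (h * F) ω ∂μ := by
    rw [← integral_condExp hmle]
    refine integral_congr_ae ?_
    filter_upwards [condExp_mul_of_stronglyMeasurable_left hhm' hhY hYi, hreg] with ω h1 h2
    rw [h1, Pi.mul_apply, Pi.mul_apply, ← h2]
  refine ⟨hh2, ?_⟩
  have hexp : ∀ ω, (Y ω - g (X ω) (S ω)) ^ 2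
      = ((Y ω - F ω) ^ 2 + h ω ^ 2) - 2 * ((h * Y) ω - (h * F) ω) := by
    intro ω
    simp only [h, Pi.mul_apply]
    ring
  unfold risk
  simp only [hexp]
  have hsum : Integrable (fun ω => (Y ω - F ω) ^ 2 + h ω ^ 2) μ := hd2.add hh2
  have hcross : Integrable (fun ω => 2 * ((h * Y) ω - (h * F) ω)) μ := (hhY.sub hhF).const_mul 2
  rw [integral_sub hsum hcross, integral_const_mul, integral_sub hhY hhF, horth,
    integral_add hd2 hh2]
  simp only [sub_self, mul_zero, sub_zero, h, F]

lemma grid_nonempty {K : ℕ} (hK : 2 ≤ K) : (grid A K).Nonempty :=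
  Finset.Nonempty.image ⟨0, by simp; omega⟩ _

lemma right_mem_grid {K : ℕ} (hK : 2 ≤ K) : A ∈ grid A K := by
  refine Finset.mem_image.2 ⟨K - 1, by simp; omega, ?_⟩
  have : (2 : ℝ) ≤ K := by exact_mod_cast hK
  rw [Nat.cast_sub (by omega)]
  have h : (K : ℝ) - 1 ≠ 0 := by linarith
  push_cast
  rw [mul_div_assoc, div_self h]
  ring

lemma abs_le_of_mem_grid (hA : 0 < A) {K : ℕ} (hK : 2 ≤ K) {y : ℝ} (hy : y ∈ grid A K) :
    |y| ≤ A := by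
  obtain ⟨k, hk, rfl⟩ := Finset.mem_image.1 hy
  have hK' : (2 : ℝ) ≤ K := by exact_mod_cast hK
  have hk : (k : ℝ) + 1 ≤ K := by exact_mod_cast Finset.mem_range.1 hk
  have h1 : 0 ≤ (k : ℝ) / ((K : ℝ) - 1) := div_nonneg (by positivity) (by linarith)
  have h2 : (k : ℝ) / ((K : ℝ) - 1) ≤ 1 := (div_le_one (by linarith)).2 (by linarith)
  rw [mul_div_assoc, abs_le]
  constructor <;> nlinarith

end global

end FairReg

/-- Optimal `𝒵`-DP-fair discretized predictor. Under the continuity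
assumption, there exists `λ* ∈ Δ_M` such that a risk-minimizer over `𝒵`-DP-fair predictors
in `ℱ_K` exists, admits the pointwise argmin form, and `λ*` minimizes the dual objective
over `Δ_M`. -/
theorem optimal_ZDP_fair_discretized_predictor
    {Ω 𝒮 : Type} [MeasurableSpace Ω] [Fintype 𝒮] [Nonempty 𝒮]
    [MeasurableSpace 𝒮] [MeasurableSingletonClass 𝒮]
    (μ : Measure Ω) [IsProbabilityMeasure μ]
    {d : ℕ} (X : Ω → Fin d → ℝ) (S : Ω → 𝒮) (Y : Ω → ℝ)
    (hX : Measurable X) (hS : Measurable S) (hY : Measurable Y)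
    (A : ℝ) (hA : 0 < A) (hYbd : ∀ᵐ ω ∂μ, |Y ω| ≤ A)
    (hπ : ∀ s : 𝒮, 0 < (μ (S ⁻¹' {s})).toReal)
    (K : ℕ) (hK : 2 ≤ K)
    (M : ℕ) (hM : 1 ≤ M) (z : Fin M → ℝ)
    (hz : ∀ m, z m ∈ Set.Ioo (-A) A) (hzmono : StrictMono z)
    -- `f*` is the regression function `f*(x,s) = 𝔼[Y | X = x, S = s]`
    (fstar : (Fin d → ℝ) → 𝒮 → ℝ)
    (hfstarMeas : Measurable (Function.uncurry fstar))
    (hfstarBd : ∀ᵐ ω ∂μ, |fstar (X ω) (S ω)| ≤ A)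
    (hreg : (fun ω => fstar (X ω) (S ω))
      =ᵐ[μ] μ[Y | MeasurableSpace.comap (fun ω => (X ω, S ω)) inferInstance])
    -- continuity assumption
    (hcont : ∀ s : 𝒮, Continuous fun t : ℝ =>
      FairReg.condProb μ S s {ω | fstar (X ω) s ≤ t}) :
    ∃ (lam : 𝒮 → Fin M → ℝ) (ffair : (Fin d → ℝ) → 𝒮 → ℝ),
      -- `λ* ∈ Δ_M`
      (∀ m, ∑ s, lam s m = 0) ∧
      -- `ffair ∈ ℱ_K`
      Measurable (Function.uncurry ffair) ∧
      (∀ x s, ffair x s ∈ FairReg.grid A K) ∧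
      -- `ffair` is `𝒵`-DP-fair
      (∀ s m, FairReg.condProb μ S s {ω | ffair (X ω) s ≤ z m}
        = (μ {ω | ffair (X ω) (S ω) ≤ z m}).toReal) ∧
      -- `ffair` minimizes the risk over `𝒵`-DP-fair predictors in `ℱ_K`
      (∀ g : (Fin d → ℝ) → 𝒮 → ℝ, Measurable (Function.uncurry g) →
        (∀ x s, g x s ∈ FairReg.grid A K) →
        (∀ s m, FairReg.condProb μ S s {ω | g (X ω) s ≤ z m}
          = (μ {ω | g (X ω) (S ω) ≤ z m}).toReal) →
        FairReg.risk μ X S Y ffair ≤ FairReg.risk μ X S Y g) ∧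
      -- pointwise form
      (∀ x s, ∀ y ∈ FairReg.grid A K,
        (μ (S ⁻¹' {s})).toReal * (ffair x s - fstar x s) ^ 2
            + ∑ m, lam s m * FairReg.aInd z (ffair x s) m
          ≤ (μ (S ⁻¹' {s})).toReal * (y - fstar x s) ^ 2
            + ∑ m, lam s m * FairReg.aInd z y m) ∧
      -- dual optimality over `Δ_M`
      (∀ lam' : 𝒮 → Fin M → ℝ, (∀ m, ∑ s, lam' s m = 0) →
        (∑ s, ∫ ω, FairReg.gmax (FairReg.grid A K)
            (fun y => -(μ (S ⁻¹' {s})).toReal * (y - fstar (X ω) s) ^ 2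
              - ∑ m, lam s m * FairReg.aInd z y m) ∂(μ[|S ⁻¹' {s}]))
        ≤ ∑ s, ∫ ω, FairReg.gmax (FairReg.grid A K)
            (fun y => -(μ (S ⁻¹' {s})).toReal * (y - fstar (X ω) s) ^ 2
              - ∑ m, lam' s m * FairReg.aInd z y m) ∂(μ[|S ⁻¹' {s}])) := by
  classical
  set p : 𝒮 → ℝ := fun s => (μ (S ⁻¹' {s})).toReal with hpdef
  set P : 𝒮 → Measure Ω := fun s => μ[|S ⁻¹' {s}] with hPdef
  set G := FairReg.grid A K with hGdef
  have hG : G.Nonempty := FairReg.grid_nonempty hK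
  have hGb : ∀ y ∈ G, |y| ≤ A := fun y hy => FairReg.abs_le_of_mem_grid hA hK hy
  have hP : ∀ s, IsProbabilityMeasure (P s) := fun s =>
    cond_isProbabilityMeasure fun h => by simpa [h] using hπ s
  have hp1 : ∀ s, p s ≤ 1 := fun s => ENNReal.toReal_le_of_le_ofReal zero_le_one (by
    simpa using prob_le_one)
  have hpos : ∀ s, 0 < p s := hπ
  have hF : ∀ s, Measurable fun ω => fstar (X ω) s := fun s =>
    hfstarMeas.comp (hX.prodMk measurable_const)
  have hFb : ∀ s, ∀ᵐ ω ∂(P s), |fstar (X ω) s| ≤ A := by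
    intro s
    filter_upwards [ae_cond_mem (μ := μ) (hS (measurableSet_singleton s)),
      cond_absolutelyContinuous.ae_le hfstarBd] with ω h1 h2
    rwa [show S ω = s from h1] at h2
  have hc : ∀ s, Continuous fun t : ℝ => (P s {ω | fstar (X ω) s ≤ t}).toReal := hcont
  -- `A` lies in the grid and exceeds every threshold, so `a(A) = 0`, which gives coercivity
  obtain ⟨lam, hlam, hdual⟩ := FairReg.exists_dual_min G (FairReg.aInd z)
    (fun s c => ∫ ω, FairReg.gmax G (fun y => -p s * (y - fstar (X ω) s) ^ 2 - c y) ∂(P s))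
    (C := 4 * A ^ 2)
    (fun s c y hy => by
      refine le_trans ?_ (FairReg.dual_lower (hF s) (hFb s) (hpos s).le hG hGb c hy)
      nlinarith [hp1 s, sq_nonneg A])
    (fun s c c' ε h => FairReg.dual_lipschitz (hF s) (hFb s) (hpos s).le hG hGb c c' h)
    (FairReg.right_mem_grid hK) (fun m => by simp [FairReg.aInd, (hz m).2])
  have hsel : ∀ l : 𝒮 → Fin M → ℝ, ∃ σ : (Fin d → ℝ) × 𝒮 → ℝ, Measurable σ ∧
      ∀ q, σ q ∈ G ∧ ∀ y ∈ G,
        p q.2 * (σ q - fstar q.1 q.2) ^ 2 + ∑ m, l q.2 m * FairReg.aInd z (σ q) m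
          ≤ p q.2 * (y - fstar q.1 q.2) ^ 2 + ∑ m, l q.2 m * FairReg.aInd z y m := by
    intro l
    obtain ⟨σ, h1, _, h3⟩ := FairReg.exists_sel G hG
      (fun (q : (Fin d → ℝ) × 𝒮) y =>
        p q.2 * (y - fstar q.1 q.2) ^ 2 + ∑ m, l q.2 m * FairReg.aInd z y m)
      (fun y _ => by
        have hm1 : Measurable fun q : (Fin d → ℝ) × 𝒮 => p q.2 :=
          (measurable_of_finite p).comp measurable_snd
        have hm2 : Measurable fun q : (Fin d → ℝ) × 𝒮 =>
            ∑ m, l q.2 m * FairReg.aInd z y m :=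
          (measurable_of_finite fun s => ∑ m, l s m * FairReg.aInd z y m).comp measurable_snd
        have hm3 : Measurable fun q : (Fin d → ℝ) × 𝒮 => fstar q.1 q.2 := hfstarMeas
        exact (hm1.mul ((measurable_const.sub hm3).pow_const 2)).add hm2)
    exact ⟨σ, h1, h3⟩
  choose σ hσm hσ using hsel
  have hsec : ∀ (τ : (Fin d → ℝ) × 𝒮 → ℝ), Measurable τ → ∀ s, Measurable fun ω => τ (X ω, s) :=
    fun τ hτ s => hτ.comp (hX.prodMk measurable_const)
  have hsec' : ∀ g : (Fin d → ℝ) → 𝒮 → ℝ, Measurable (Function.uncurry g) →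
      ∀ s, Measurable fun ω => g (X ω) s := fun g hg s => hsec _ hg s
  -- first-order condition at `lam`: perturb along `t • v` with `t = 1 / (n + 1)` and let `n → ∞`
  have hfoc : ∀ v : 𝒮 → Fin M → ℝ, (∀ m, ∑ s, v s m = 0) →
      ∑ s, ∑ m, v s m * (P s {ω | σ lam (X ω, s) ≤ z m}).toReal ≤ 0 := by
    intro v hv
    let t : ℕ → ℝ := fun n => 1 / ((n : ℝ) + 1)
    have ht : Tendsto t atTop (nhds 0) := tendsto_one_div_add_atTop_nhds_zero_nat
    have htpos : ∀ n, 0 < t n := fun n => by positivity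
    let l : ℕ → 𝒮 → Fin M → ℝ := fun n s m => lam s m + t n * v s m
    have hlim : Tendsto
        (fun n => ∑ s, ∑ m, v s m * (P s {ω | σ (l n) (X ω, s) ≤ z m}).toReal) atTop
        (nhds (∑ s, ∑ m, v s m * (P s {ω | σ lam (X ω, s) ≤ z m}).toReal)) :=
      tendsto_finsetSum _ fun s _ => FairReg.tendsto_penalty z (hF s) (hc s) (hpos s)
        (lam s) (v s) ht (fun n => hsec _ (hσm (l n)) s) (fun n ω => (hσ (l n) (X ω, s)).1)
        (fun n ω => (hσ (l n) (X ω, s)).2) (hsec _ (hσm lam) s)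
        (fun ω => (hσ lam (X ω, s)).1) (fun ω => (hσ lam (X ω, s)).2)
    refine le_of_tendsto' hlim fun n => ?_
    have h1 := Finset.sum_le_sum fun s (_ : s ∈ Finset.univ) =>
      FairReg.dual_variation z (hF s) (hFb s) (hpos s).le hG hGb (lam s) (v s) (t n)
        (hsec _ (hσm (l n)) s) (fun ω => (hσ (l n) (X ω, s)).1)
        (fun ω => (hσ (l n) (X ω, s)).2)
    rw [Finset.sum_add_distrib, ← Finset.mul_sum] at h1
    have h2 := hdual (l n) (fun m => by
      simp only [l]
      rw [Finset.sum_add_distrib, ← Finset.mul_sum, hlam m, hv m]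
      simp)
    have h3 := h1.trans h2
    have h4 : t n * ∑ s, ∑ m, v s m * (P s {ω | σ (l n) (X ω, s) ≤ z m}).toReal ≤ 0 := by
      simp only [l] at h3 ⊢
      linarith
    exact nonpos_of_mul_nonpos_right h4 (htpos n)
  -- testing with `v = e_{s,m} - e_{r,m}` equalizes the group probabilities
  have hle : ∀ m s s', (P s {ω | σ lam (X ω, s) ≤ z m}).toReal
      ≤ (P s' {ω | σ lam (X ω, s') ≤ z m}).toReal := by
    intro m s s'
    have := hfoc (fun r k => if k = m then (if r = s then 1 else 0) - (if r = s' then 1 else 0)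
      else 0) (fun k => by by_cases hk : k = m <;> simp [hk])
    simp only [ite_mul, zero_mul, Finset.sum_ite_eq', Finset.mem_univ, if_true, sub_mul, one_mul,
      Finset.sum_sub_distrib] at this
    linarith
  let ffair : (Fin d → ℝ) → 𝒮 → ℝ := fun x s => σ lam (x, s)
  have hffm : Measurable (Function.uncurry ffair) := hσm lam
  have hffG : ∀ x s, ffair x s ∈ G := fun x s => (hσ lam (x, s)).1
  have hfair : ∀ s m, FairReg.condProb μ S s {ω | ffair (X ω) s ≤ z m}
      = (μ {ω | ffair (X ω) (S ω) ≤ z m}).toReal := by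
    intro s m
    have hm : Measurable fun ω => ffair (X ω) (S ω) := hffm.comp (hX.prodMk hS)
    have htot := FairReg.total_integral hS hπ (fun ω s => FairReg.aInd z (ffair (X ω) s) m)
      (FairReg.integrable_aInd z hm m)
    have hone : ∑ s, p s = 1 := by
      have := FairReg.total_integral (μ := μ) hS hπ (fun _ _ => (1 : ℝ)) (integrable_const _)
      have hP' : ∀ s, IsProbabilityMeasure (μ[|S ⁻¹' {s}]) := hP
      simpa using this.symm
    rw [FairReg.integral_aInd z hm m] at htot
    rw [htot]
    have : ∀ r, ∫ ω, FairReg.aInd z (ffair (X ω) r) m ∂(P r)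
        = (P s {ω | ffair (X ω) s ≤ z m}).toReal := fun r => by
      rw [FairReg.integral_aInd z (hsec' _ hffm r) m]
      exact le_antisymm (hle m r s) (hle m s r)
    calc (P s {ω | ffair (X ω) s ≤ z m}).toReal
        = ∑ r, p r * (P s {ω | ffair (X ω) s ≤ z m}).toReal := by
          rw [← Finset.sum_mul, hone, one_mul]
      _ = ∑ r, p r * ∫ ω, FairReg.aInd z (ffair (X ω) r) m ∂(P r) := by
          simp only [this]
  -- for a fair predictor the total penalty cancels, since `∑ s, lam s m = 0`
  have hzero : ∀ g : (Fin d → ℝ) → 𝒮 → ℝ, (∀ s m, FairReg.condProb μ S s {ω | g (X ω) s ≤ z m}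
      = (μ {ω | g (X ω) (S ω) ≤ z m}).toReal) →
      ∑ s, ∑ m, lam s m * (P s {ω | g (X ω) s ≤ z m}).toReal = 0 := by
    intro g hg
    have : ∀ s m, (P s {ω | g (X ω) s ≤ z m}).toReal
      = (μ {ω | g (X ω) (S ω) ≤ z m}).toReal := hg
    simp only [this]
    rw [Finset.sum_comm]
    simp [← Finset.sum_mul, hlam]
  refine ⟨lam, ffair, hlam, hffm, hffG, hfair, ?_, fun x s y hy => (hσ lam (x, s)).2 y hy, hdual⟩
  intro g hgm hgG hgfair
  obtain ⟨hi1, hr1⟩ := FairReg.risk_eq hX hS hY hYbd hfstarMeas hfstarBd hreg hffm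
    (fun x s => hGb _ (hffG x s))
  obtain ⟨hi2, hr2⟩ := FairReg.risk_eq hX hS hY hYbd hfstarMeas hfstarBd hreg hgm
    (fun x s => hGb _ (hgG x s))
  rw [hr1, hr2, FairReg.total_integral hS hπ (fun ω s => (ffair (X ω) s - fstar (X ω) s) ^ 2) hi1,
    FairReg.total_integral hS hπ (fun ω s => (g (X ω) s - fstar (X ω) s) ^ 2) hi2]
  have hint : ∀ g : (Fin d → ℝ) → 𝒮 → ℝ, Measurable (Function.uncurry g) →
      (∀ x s, g x s ∈ G) → ∀ s,
      Integrable (fun ω => p s * (g (X ω) s - fstar (X ω) s) ^ 2) (P s) := by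
    intro g hgm hgG s
    refine Integrable.const_mul (Integrable.of_bound
      (((hsec' _ hgm s).sub (hF s)).pow_const 2).aestronglyMeasurable (4 * A ^ 2) ?_) _
    filter_upwards [hFb s] with ω hω
    rw [Real.norm_of_nonneg (sq_nonneg _)]
    exact FairReg.sq_dev_le (hGb _ (hgG _ _)) hω
  have hLag : ∀ g : (Fin d → ℝ) → 𝒮 → ℝ, Measurable (Function.uncurry g) →
      (∀ x s, g x s ∈ G) → ∀ s,
      ∫ ω, (p s * (g (X ω) s - fstar (X ω) s) ^ 2
        + ∑ m, lam s m * FairReg.aInd z (g (X ω) s) m) ∂(P s)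
      = p s * ∫ ω, (g (X ω) s - fstar (X ω) s) ^ 2 ∂(P s)
        + ∑ m, lam s m * (P s {ω | g (X ω) s ≤ z m}).toReal := by
    intro g hgm hgG s
    rw [integral_add (hint g hgm hgG s) (FairReg.integrable_penalty z (hsec' _ hgm s) (lam s)),
      integral_const_mul]
    congr 1
    exact FairReg.integral_penalty z (hsec' _ hgm s) (lam s)
  have hcmp := Finset.sum_le_sum fun s (_ : s ∈ Finset.univ) =>
    integral_mono (μ := P s)
      ((hint ffair hffm hffG s).add (FairReg.integrable_penalty z (hsec' _ hffm s) (lam s)))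
      ((hint g hgm hgG s).add (FairReg.integrable_penalty z (hsec' _ hgm s) (lam s)))
      (fun ω => (hσ lam (X ω, s)).2 _ (hgG (X ω) s))
  have hcmp' : ∑ s, ∫ ω, (p s * (ffair (X ω) s - fstar (X ω) s) ^ 2
        + ∑ m, lam s m * FairReg.aInd z (ffair (X ω) s) m) ∂(P s)
      ≤ ∑ s, ∫ ω, (p s * (g (X ω) s - fstar (X ω) s) ^ 2
        + ∑ m, lam s m * FairReg.aInd z (g (X ω) s) m) ∂(P s) := hcmp
  simp only [hLag ffair hffm hffG, hLag g hgm hgG, Finset.sum_add_distrib] at hcmp'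
  rw [hzero ffair hfair, hzero g hgfair] at hcmp'
  have : ∑ s, p s * ∫ ω, (ffair (X ω) s - fstar (X ω) s) ^ 2 ∂(P s)
      ≤ ∑ s, p s * ∫ ω, (g (X ω) s - fstar (X ω) s) ^ 2 ∂(P s) := by linarith
  linarith
end
end

section
/- Under the continuity assumption, the dual objective H(λ) := Σ_{s∈𝒮} 𝔼_s[ max_{y∈𝒴_K} ( −π_s (y − f*(X,s))² − ⟨λ_s, a(y) − ℓ⟩ ) ] is differentiable in λ with partial derivatives ∂H/∂λ_{s,m} = ℓ_m − ℙ_s( f*_λ(X,s) ≤ z_m ), where f*_λ(x,s) ∈ argmin_{y∈𝒴_K} { π_s (y − f*(x,s))² + ⟨λ_s, a(y)⟩ }; consequently, at any global minimizer λ* of H, the predictor f*_{λ*} satisfies ℙ_s( f*_{λ*}(X,s) ≤ z_m ) = ℓ_m for all s ∈ 𝒮 and m ∈ {1,…,M}, i.e., f*_{λ*} is (ℓ,𝒵)-fair. -/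
/-!
For each group `s`, the integrand of `H` is a maximum of finitely many functions that are affine in
`λ`. Two of them, indexed by `y ≠ y'`, can agree at a given `λ` only if `f*(X,s)` equals one specific
real number (the quadratic terms cancel, leaving a linear equation). A continuous distribution
function has no atoms, so almost surely the maximizer is unique (`ae_strict_max`). Where it is unique
the maximum coincides near `λ` with a single affine function, whose derivative is
`-(a(f*_λ) - ℓ)` (`hasFDerivAt_gmax`). The maximum is moreover Lipschitz in `λ` uniformly in `ω`,
so dominated convergence allows differentiation under the integral sign (`hasFDerivAt_integral_gmax`).
Since uniqueness holds almost surely, any argmin selection is a.e. equal to a measurable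
one (`aemeasurable_sel`), which turns the integral of the derivative into the stated probability.
Fairness at a minimizer is Fermat's rule applied to each partial derivative.
-/


open MeasureTheory ProbabilityTheory Filter Function

noncomputable section

namespace FairReg

open scoped Topology

/-- The function of `y` maximized in the dual objective, for one group of weight `p`, with
`c` the value of `f*`, `b y` in the role of `a(y) - ℓ` and `v` in the role of `λ_s`. -/
def score {ι : Type*} [Fintype ι] (p : ℝ) (b : ℝ → ι → ℝ) (c : ℝ) (v : ι → ℝ) (y : ℝ) : ℝ :=
  -p * (y - c) ^ 2 - ∑ m, v m * b y m

/-- The differential in `v` of `score p b c v y`. -/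
def dscore {ι : Type*} [Fintype ι] (b : ℝ → ι → ℝ) (y : ℝ) : (ι → ℝ) →L[ℝ] ℝ :=
  -∑ m, b y m • ContinuousLinearMap.proj (R := ℝ) (φ := fun _ : ι => ℝ) m

lemma gmax_eq {t : Finset ℝ} {g : ℝ → ℝ} {y : ℝ} (hy : y ∈ t) (h : ∀ y' ∈ t, g y' ≤ g y) :
    gmax t g = g y := by
  apply IsGreatest.csSup_eq
  refine ⟨⟨y, hy, rfl⟩, ?_⟩
  rintro _ ⟨y', hy', rfl⟩
  exact h y' hy'

lemma gmax_eq_sup' {t : Finset ℝ} (ht : t.Nonempty) (g : ℝ → ℝ) : gmax t g = t.sup' ht g :=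
  (Finset.sup'_eq_csSup_image t ht g).symm

lemma gmax_le_add {t : Finset ℝ} (ht : t.Nonempty) {g h : ℝ → ℝ} {C : ℝ}
    (H : ∀ y ∈ t, g y ≤ h y + C) : gmax t g ≤ gmax t h + C := by
  rw [gmax_eq_sup' ht, gmax_eq_sup' ht]
  apply Finset.sup'_le
  intro y hy
  have := Finset.le_sup' h hy
  linarith [H y hy]

section

variable {ι : Type*} [Fintype ι]

lemma score_continuous (p : ℝ) (b : ℝ → ι → ℝ) (c y : ℝ) :
    Continuous fun v => score p b c v y := by
  unfold score; fun_prop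

lemma score_sub_le {p : ℝ} {b : ℝ → ι → ℝ} (hb : ∀ y m, |b y m| ≤ 1) (c : ℝ) (v w : ι → ℝ)
    (y : ℝ) : score p b c v y ≤ score p b c w y + Fintype.card ι * ‖v - w‖ := by
  have h : ∑ m, (w m - v m) * b y m ≤ ∑ _m : ι, ‖v - w‖ := by
    apply Finset.sum_le_sum
    intro m _
    have h1 : |v m - w m| ≤ ‖v - w‖ := by simpa using norm_le_pi_norm (v - w) m
    calc (w m - v m) * b y m ≤ |(w m - v m) * b y m| := le_abs_self _
      _ = |v m - w m| * |b y m| := by rw [abs_mul, abs_sub_comm]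
      _ ≤ ‖v - w‖ * 1 := by gcongr; exact hb y m
      _ = _ := mul_one _
  simp only [sub_mul, Finset.sum_sub_distrib, Finset.sum_const, Finset.card_univ,
    nsmul_eq_mul] at h
  unfold score
  linarith

lemma hasFDerivAt_score (p : ℝ) (b : ℝ → ι → ℝ) (c y : ℝ) (v : ι → ℝ) :
    HasFDerivAt (fun v => score p b c v y) (dscore b y) v := by
  have h := ((dscore b y).hasFDerivAt (x := v)).const_add (-p * (y - c) ^ 2)
  refine h.congr_of_eventuallyEq (Eventually.of_forall fun w => ?_)
  simp [score, dscore, sub_eq_add_neg, mul_comm]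

/-- Danskin's theorem for finitely many affine functions with a unique maximizer. -/
lemma hasFDerivAt_gmax {t : Finset ℝ} {p : ℝ} {b : ℝ → ι → ℝ} {c y : ℝ} {v : ι → ℝ} (hy : y ∈ t)
    (h : ∀ y' ∈ t, y' ≠ y → score p b c v y' < score p b c v y) :
    HasFDerivAt (fun v => gmax t (score p b c v)) (dscore b y) v := by
  refine (hasFDerivAt_score p b c y v).congr_of_eventuallyEq ?_
  have : ∀ᶠ w in 𝓝 v, ∀ y' ∈ t, y' ≠ y → score p b c w y' < score p b c w y := by
    rw [Filter.eventually_all_finset]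
    intro y' hy'
    by_cases hne : y' = y
    · simp [hne]
    · filter_upwards [(score_continuous p b c y').continuousAt.eventually_lt
        (score_continuous p b c y).continuousAt (h y' hy' hne)] with w hw _ using hw
  filter_upwards [this] with w hw
  refine gmax_eq hy fun y' hy' => ?_
  by_cases hne : y' = y
  · rw [hne]
  · exact (hw y' hy' hne).le

variable {Ω : Type*} [MeasurableSpace Ω] {ν : Measure Ω} {p : ℝ} {b : ℝ → ι → ℝ}
  {g sel : Ω → ℝ} {t : Finset ℝ} {v : ι → ℝ}

/-- Almost surely the maximizer of the score is unique: a tie between `y` and `y'` forces `g` to take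
one specific value, which has probability zero. -/
lemma ae_strict_max (hp : 0 < p) (hg : ∀ c, ν {ω | g ω = c} = 0)
    (hmax : ∀ ω, ∀ y ∈ t, score p b (g ω) v y ≤ score p b (g ω) v (sel ω))
    (hsel : ∀ ω, sel ω ∈ t) :
    ∀ᵐ ω ∂ν, ∀ y ∈ t, y ≠ sel ω → score p b (g ω) v y < score p b (g ω) v (sel ω) := by
  have key : ∀ y ∈ t, ∀ y' ∈ t, ∀ᵐ ω ∂ν, y ≠ y' → score p b (g ω) v y ≠ score p b (g ω) v y' := by
    intro y _ y' _
    have h2p : 2 * p ≠ 0 := by positivity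
    -- the solution of the linear equation obtained by equating the two scores
    have h0 := hg ((p * (y ^ 2 - y' ^ 2) + ∑ m, v m * b y m - ∑ m, v m * b y' m)
      / (2 * p * (y - y')))
    rw [measure_eq_zero_iff_ae_notMem] at h0
    filter_upwards [h0] with ω hω hne heq
    apply hω
    have : y - y' ≠ 0 := sub_ne_zero.mpr hne
    change g ω = _
    rw [eq_div_iff (mul_ne_zero h2p this)]
    unfold score at heq
    linarith
  have key' : ∀ᵐ ω ∂ν, ∀ y ∈ t, ∀ y' ∈ t, y ≠ y' →
      score p b (g ω) v y ≠ score p b (g ω) v y' := by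
    rw [Filter.eventually_all_finset]
    intro y hy
    rw [Filter.eventually_all_finset]
    exact key y hy
  filter_upwards [key'] with ω hω y hy hne
  exact lt_of_le_of_ne (hmax ω y hy) (hω y hy _ (hsel ω) hne)

lemma measurable_score (hgm : Measurable g) (v : ι → ℝ) (y : ℝ) :
    Measurable fun ω => score p b (g ω) v y := by
  unfold score; fun_prop

/-- The selection is not assumed measurable; it agrees almost everywhere with
`∑ y, y * 1{y is the strict maximizer}`, which is. -/
lemma aemeasurable_sel (hgm : Measurable g) (hsel : ∀ ω, sel ω ∈ t)
    (hs : ∀ᵐ ω ∂ν, ∀ y ∈ t, y ≠ sel ω → score p b (g ω) v y < score p b (g ω) v (sel ω)) :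
    AEMeasurable sel ν := by
  classical
  let E : ℝ → Set Ω := fun y =>
    {ω | ∀ y' ∈ t, y' ≠ y → score p b (g ω) v y' < score p b (g ω) v y}
  have hE : ∀ y, MeasurableSet (E y) := by
    intro y
    have : E y = ⋂ y' ∈ t, ⋂ _ : y' ≠ y,
        {ω | score p b (g ω) v y' < score p b (g ω) v y} := by
      ext ω; simp [E]
    rw [this]
    refine Finset.measurableSet_biInter _ fun y' _ => MeasurableSet.iInter fun _ => ?_
    exact measurableSet_lt (measurable_score hgm v y') (measurable_score hgm v y)
  refine ⟨fun ω => ∑ y ∈ t, (E y).indicator (fun _ => y) ω, ?_, ?_⟩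
  · exact Finset.measurable_sum _ fun y _ => measurable_const.indicator (hE y)
  · filter_upwards [hs] with ω hω
    rw [Finset.sum_eq_single (sel ω)]
    · rw [Set.indicator_of_mem]; exact hω
    · intro y hy hne
      apply Set.indicator_of_notMem
      intro hmem
      exact lt_asymm (hω y hy hne) (hmem _ (hsel ω) hne.symm)
    · intro h; exact absurd (hsel ω) h

lemma integrable_gmax_s11 [IsFiniteMeasure ν] (ht : t.Nonempty) (hgm : Measurable g) {A : ℝ}
    (hgb : ∀ᵐ ω ∂ν, |g ω| ≤ A) (v : ι → ℝ) :
    Integrable (fun ω => gmax t (score p b (g ω) v)) ν := by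
  have h1 : Integrable g ν := Integrable.of_bound hgm.aestronglyMeasurable A hgb
  have h2 : Integrable (fun ω => g ω ^ 2) ν := by
    refine Integrable.of_bound (hgm.pow_const 2).aestronglyMeasurable (A ^ 2) ?_
    filter_upwards [hgb] with ω hω
    rw [Real.norm_eq_abs, abs_pow]
    gcongr
  have h3 : ∀ y, Integrable (fun ω => score p b (g ω) v y) ν := by
    intro y
    have := (((h1.const_mul (2 * p * y)).sub (h2.const_mul p)).add
      (integrable_const (-p * y ^ 2 - ∑ m, v m * b y m)))
    refine this.congr (Eventually.of_forall fun ω => ?_)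
    simp only [Pi.add_apply, Pi.sub_apply, score]
    ring
  have h4 : Integrable (t.sup' ht fun y ω => score p b (g ω) v y) ν :=
    Finset.sup'_induction (p := fun f : Ω → ℝ => Integrable f ν) ht _
      (fun _ h _ h' => h.sup h') fun y _ => h3 y
  refine h4.congr (Eventually.of_forall fun ω => ?_)
  simp only [gmax_eq_sup' ht, Finset.sup'_apply]

lemma hasFDerivAt_integral_gmax [IsFiniteMeasure ν] (hp : 0 < p)
    (hbm : ∀ m, Measurable fun y => b y m) (hb : ∀ y m, |b y m| ≤ 1)
    (hgm : Measurable g) {A : ℝ} (hgb : ∀ᵐ ω ∂ν, |g ω| ≤ A) (hg : ∀ c, ν {ω | g ω = c} = 0)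
    (hsel : ∀ ω, sel ω ∈ t)
    (hmax : ∀ ω, ∀ y ∈ t, score p b (g ω) v y ≤ score p b (g ω) v (sel ω)) (ht : t.Nonempty) :
    Integrable (fun ω => dscore b (sel ω)) ν ∧
      HasFDerivAt (fun v => ∫ ω, gmax t (score p b (g ω) v) ∂ν)
        (∫ ω, dscore b (sel ω) ∂ν) v := by
  have hs := ae_strict_max hp hg hmax hsel
  have hselm := aemeasurable_sel hgm hsel hs
  refine hasFDerivAt_integral_of_dominated_loc_of_lip (s := Set.univ)
    (bound := fun _ => (Fintype.card ι : ℝ)) univ_mem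
    (Eventually.of_forall fun w => (integrable_gmax_s11 ht hgm hgb w).aestronglyMeasurable)
    (integrable_gmax_s11 ht hgm hgb v) ?_ ?_ (integrable_const _) ?_
  · unfold dscore
    refine (Finset.aestronglyMeasurable_fun_sum _ fun m _ => ?_).neg
    exact ((hbm m).comp_aemeasurable hselm).aestronglyMeasurable.smul_const _
  · refine Eventually.of_forall fun ω => LipschitzWith.lipschitzOnWith ?_
    refine LipschitzWith.of_le_add_mul _ fun w w' => ?_
    rw [dist_eq_norm]
    simpa using gmax_le_add ht fun y _ => score_sub_le (p := p) hb (g ω) w w' y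
  · filter_upwards [hs] with ω hω
    exact hasFDerivAt_gmax (hsel ω) hω

lemma dscore_single [DecidableEq ι] (y : ℝ) (m : ι) : dscore b y (Pi.single m 1) = -b y m := by
  simp [dscore, Pi.single_apply]

/-- A continuous distribution function has no atoms. -/
lemma measure_eq_zero_of_continuous [IsFiniteMeasure ν] (hgm : Measurable g)
    (hc : Continuous fun c : ℝ => (ν {ω | g ω ≤ c}).toReal) (c : ℝ) : ν {ω | g ω = c} = 0 := by
  have hle : ∀ c' < c, ν.real {ω | g ω = c} ≤ ν.real {ω | g ω ≤ c} - ν.real {ω | g ω ≤ c'} := by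
    intro c' hc'
    have hsub : {ω | g ω ≤ c'} ⊆ {ω | g ω ≤ c} := fun ω (h : g ω ≤ c') => h.trans hc'.le
    rw [← measureReal_sdiff hsub (measurableSet_le hgm measurable_const)]
    refine measureReal_mono ?_
    intro ω (hω : g ω = c)
    exact ⟨hω.le, fun h : g ω ≤ c' => by linarith⟩
  have hlim : Tendsto (fun c' => ν.real {ω | g ω ≤ c} - ν.real {ω | g ω ≤ c'}) (𝓝[<] c) (𝓝 0) := by
    have := (hc.tendsto c).mono_left (nhdsWithin_le_nhds (s := Set.Iio c))
    simpa [Measure.real] using this.const_sub (ν.real {ω | g ω ≤ c})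
  have h0 : ν.real {ω | g ω = c} ≤ 0 :=
    ge_of_tendsto hlim (by filter_upwards [self_mem_nhdsWithin] with c' hc' using hle c' hc')
  exact (measureReal_eq_zero_iff).mp (le_antisymm h0 measureReal_nonneg)

end

end FairReg

/-- Under the continuity assumption the dual objective `H` is differentiable
with partial derivatives `∂H/∂λ_{s,m} = ℓ_m - ℙ_s(f*_λ(X,s) ≤ z_m)`; consequently, at any
global minimizer `λ*` of `H` the predictor `f*_{λ*}` is `(ℓ,𝒵)`-fair. -/
theorem dual_objective_differentiable_first_order
    {Ω 𝒮 : Type} [MeasurableSpace Ω] [Fintype 𝒮] [Nonempty 𝒮] [DecidableEq 𝒮]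
    [MeasurableSpace 𝒮] [MeasurableSingletonClass 𝒮]
    (μ : Measure Ω) [IsProbabilityMeasure μ]
    {d : ℕ} (X : Ω → Fin d → ℝ) (S : Ω → 𝒮)
    (hX : Measurable X) (hS : Measurable S)
    (A : ℝ) (hA : 0 < A)
    (hπ : ∀ s : 𝒮, 0 < (μ (S ⁻¹' {s})).toReal)
    (K : ℕ) (hK : 2 ≤ K)
    (M : ℕ) (hM : 1 ≤ M) (ℓ : Fin M → ℝ) (z : Fin M → ℝ)
    (hℓ : ∀ m, ℓ m ∈ Set.Ioo (0 : ℝ) 1) (hℓmono : StrictMono ℓ)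
    (hz : ∀ m, z m ∈ Set.Ioo (-A) A) (hzmono : StrictMono z)
    (fstar : (Fin d → ℝ) → 𝒮 → ℝ)
    (hfstarMeas : Measurable (Function.uncurry fstar))
    (hfstarBd : ∀ᵐ ω ∂μ, |fstar (X ω) (S ω)| ≤ A)
    -- continuity assumption
    (hcont : ∀ s : 𝒮, Continuous fun t : ℝ =>
      FairReg.condProb μ S s {ω | fstar (X ω) s ≤ t})
    -- the dual objective `H`
    (H : (𝒮 × Fin M → ℝ) → ℝ)
    (hH : ∀ lam, H lam = ∑ s, ∫ ω, FairReg.gmax (FairReg.grid A K)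
        (fun y => -(μ (S ⁻¹' {s})).toReal * (y - fstar (X ω) s) ^ 2
          - ∑ m, lam (s, m) * (FairReg.aInd z y m - ℓ m)) ∂(μ[|S ⁻¹' {s}]))
    -- `f*_λ` is a pointwise argmin selection
    (flam : (𝒮 × Fin M → ℝ) → (Fin d → ℝ) → 𝒮 → ℝ)
    (hflam : ∀ lam x s,
      flam lam x s ∈ FairReg.grid A K ∧
      ∀ y ∈ FairReg.grid A K,
        (μ (S ⁻¹' {s})).toReal * (flam lam x s - fstar x s) ^ 2
            + ∑ m, lam (s, m) * FairReg.aInd z (flam lam x s) m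
          ≤ (μ (S ⁻¹' {s})).toReal * (y - fstar x s) ^ 2
            + ∑ m, lam (s, m) * FairReg.aInd z y m) :
    -- `H` is differentiable …
    Differentiable ℝ H ∧
    -- … with partial derivatives `∂H/∂λ_{s,m} = ℓ_m - ℙ_s(f*_λ(X,s) ≤ z_m)` …
    (∀ (lam : 𝒮 × Fin M → ℝ) (s : 𝒮) (m : Fin M),
      HasDerivAt (fun t : ℝ => H (Function.update lam (s, m) t))
        (ℓ m - FairReg.condProb μ S s {ω | flam lam (X ω) s ≤ z m})
        (lam (s, m))) ∧
    -- … hence at any global minimizer `λ*` of `H`, `f*_{λ*}` is `(ℓ,𝒵)`-fair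
    (∀ lamstar : 𝒮 × Fin M → ℝ, (∀ lam, H lamstar ≤ H lam) →
      ∀ s m, FairReg.condProb μ S s {ω | flam lamstar (X ω) s ≤ z m} = ℓ m) := by
  classical
  have hSm : ∀ s, MeasurableSet (S ⁻¹' {s}) := fun s => hS (measurableSet_singleton s)
  have hprob : ∀ s, IsProbabilityMeasure (μ[|S ⁻¹' {s}]) := fun s =>
    cond_isProbabilityMeasure fun h => by simpa [h] using hπ s
  have hgm : ∀ s, Measurable fun ω => fstar (X ω) s := fun s =>
    hfstarMeas.comp (hX.prodMk measurable_const)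
  have hgb : ∀ s, ∀ᵐ ω ∂(μ[|S ⁻¹' {s}]), |fstar (X ω) s| ≤ A := by
    intro s
    filter_upwards [ae_cond_mem (hSm s),
      (cond_absolutelyContinuous (μ := μ) (s := S ⁻¹' {s})).ae_le hfstarBd] with ω h1 h2
    have h3 : S ω = s := h1
    rwa [h3] at h2
  have hat : ∀ s c, μ[|S ⁻¹' {s}] {ω | fstar (X ω) s = c} = 0 := fun s c =>
    FairReg.measure_eq_zero_of_continuous (hgm s) (hcont s) c
  have ht : (FairReg.grid A K).Nonempty := by
    simp only [FairReg.grid, Finset.image_nonempty, Finset.nonempty_range_iff]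
    omega
  let b : ℝ → Fin M → ℝ := fun y m => FairReg.aInd z y m - ℓ m
  have ham : ∀ m, Measurable fun y => FairReg.aInd z y m := fun m =>
    Measurable.ite measurableSet_Iic measurable_const measurable_const
  have hbm : ∀ m, Measurable fun y => b y m := fun m => (ham m).sub_const _
  have hb : ∀ y m, |b y m| ≤ 1 := by
    intro y m
    obtain ⟨h1, h2⟩ := hℓ m
    simp only [b, FairReg.aInd]
    split_ifs <;> rw [abs_le] <;> constructor <;> linarith
  -- the cost in `hflam` and the score differ by sign and the constant `⟨λ_s, ℓ⟩`
  have hmax : ∀ (lam : 𝒮 × Fin M → ℝ) (s : 𝒮) (ω : Ω), ∀ y ∈ FairReg.grid A K,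
      FairReg.score (μ (S ⁻¹' {s})).toReal b (fstar (X ω) s) (fun m => lam (s, m)) y ≤
      FairReg.score (μ (S ⁻¹' {s})).toReal b (fstar (X ω) s) (fun m => lam (s, m))
        (flam lam (X ω) s) := by
    intro lam s ω y hy
    have := (hflam lam (X ω) s).2 y hy
    simp only [FairReg.score, b, mul_sub, Finset.sum_sub_distrib]
    linarith
  -- restriction of `λ` to its block `λ_s`
  let P : 𝒮 → (𝒮 × Fin M → ℝ) →L[ℝ] (Fin M → ℝ) := fun s =>
    ContinuousLinearMap.pi fun m => ContinuousLinearMap.proj (s, m)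
  have hsel : ∀ lam s ω, flam lam (X ω) s ∈ FairReg.grid A K := fun lam s ω =>
    (hflam lam (X ω) s).1
  have hblock := fun (lam : 𝒮 × Fin M → ℝ) (s : 𝒮) =>
    FairReg.hasFDerivAt_integral_gmax (hπ s) hbm hb (hgm s) (hgb s) (hat s) (hsel lam s)
      (hmax lam s) ht
  have hHd : ∀ lam, HasFDerivAt H (∑ s, (∫ ω, FairReg.dscore b (flam lam (X ω) s)
      ∂(μ[|S ⁻¹' {s}])).comp (P s)) lam := by
    intro lam
    have h := HasFDerivAt.fun_sum (u := Finset.univ) fun s _ =>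
      (show HasFDerivAt _ _ (P s lam) from (hblock lam s).2).comp lam (P s).hasFDerivAt
    refine h.congr_of_eventuallyEq (Eventually.of_forall fun w => ?_)
    rw [hH]
    rfl
  have hpart : ∀ (lam : 𝒮 × Fin M → ℝ) (s : 𝒮) (m : Fin M),
      HasDerivAt (fun t : ℝ => H (Function.update lam (s, m) t))
        (ℓ m - FairReg.condProb μ S s {ω | flam lam (X ω) s ≤ z m}) (lam (s, m)) := by
    intro lam s m
    have h1 := hHd lam
    nth_rewrite 2 [← Function.update_eq_self (s, m) lam] at h1
    have h2 := h1.comp_hasDerivAt (lam (s, m)) (hasDerivAt_update lam (s, m) (lam (s, m)))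
    refine h2.congr_deriv ?_
    have hP : ∀ s', P s' (Pi.single (s, m) 1) = if s' = s then Pi.single m 1 else 0 := by
      intro s'
      ext m'
      by_cases hss : s' = s <;> simp [P, Pi.single_apply, hss]
    have hselm := FairReg.aemeasurable_sel (hgm s) (hsel lam s)
      (FairReg.ae_strict_max (hπ s) (hat s) (hmax lam s) (hsel lam s))
    have hnull : NullMeasurableSet {ω | flam lam (X ω) s ≤ z m} (μ[|S ⁻¹' {s}]) :=
      hselm.nullMeasurable measurableSet_Iic
    have hind : (fun ω => FairReg.aInd z (flam lam (X ω) s) m) =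
        Set.indicator {ω | flam lam (X ω) s ≤ z m} (fun _ => (1 : ℝ)) := by
      ext ω; simp [FairReg.aInd, Set.indicator_apply]
    have hint : ∫ ω, FairReg.aInd z (flam lam (X ω) s) m ∂(μ[|S ⁻¹' {s}]) =
        FairReg.condProb μ S s {ω | flam lam (X ω) s ≤ z m} := by
      rw [hind, integral_indicator₀ hnull]
      simp [FairReg.condProb, Measure.real]
    have hai : Integrable (fun ω => FairReg.aInd z (flam lam (X ω) s) m) (μ[|S ⁻¹' {s}]) := by
      rw [hind]; exact (integrable_const (1 : ℝ)).indicator₀ hnull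
    rw [sum_apply, Finset.sum_eq_single s]
    · rw [ContinuousLinearMap.comp_apply, hP, if_pos rfl,
        ContinuousLinearMap.integral_apply (hblock lam s).1]
      simp only [FairReg.dscore_single, b]
      rw [integral_neg, integral_sub hai (integrable_const _), hint]
      simp
    · intro s' _ hne
      rw [ContinuousLinearMap.comp_apply, hP, if_neg hne, map_zero]
    · simp
  refine ⟨fun lam => (hHd lam).differentiableAt, hpart, fun lam hmin s m => ?_⟩
  have hloc : IsLocalMin (fun t : ℝ => H (Function.update lam (s, m) t)) (lam (s, m)) :=
    Eventually.of_forall fun t => by simpa using hmin _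
  linarith [hloc.hasDerivAt_eq_zero (hpart lam s m)]
end
end
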